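/- arXiv:math/0104241 — 3 statements merged into one kernel-verified Lean document; each statement's English description precedes it below -/
import Mathlib

section
/- Let y : ℤ≥0² → F satisfy the knight recurrence y_{i,j} = (α y_{i,j−1} y_{i−2,j} + β y_{i−1,j} y_{i−1,j−1})/y_{i−2,j−1} for i ≥ 2, j ≥ 1, where the entries y_{a,b} with a < 2 or b < 1 are independent indeterminates and F is the rational function field in them over ℤ[α,β]. Then every y_{i,j} is a Laurent polynomial in the initial entries with coefficients in ℤ[α,β]. -/
open MvPolynomial

/-- Index set for the initial cluster of the knight recurrence:
pairs (a,b) ∈ ℤ≥0² with a < 2 or b < 1. -/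
def KnightInit : Type := {p : ℕ × ℕ // p.1 < 2 ∨ p.2 < 1}

/-- A local subring `O` of a field `F`, with its maximal ideal `M`. -/
structure KnightLoc {F : Type*} [Field F] (O : Subring F) (M : F → Prop) : Prop where
  sub : ∀ a, M a → a ∈ O
  add : ∀ a b, M a → M b → M (a + b)
  mul : ∀ a b, a ∈ O → M b → M (a * b)
  one : ¬ M 1
  inv : ∀ a, a ∈ O → ¬ M a → a⁻¹ ∈ O

namespace KnightLoc

variable {F : Type*} [Field F] {O : Subring F} {M : F → Prop}

lemma mul' (h : KnightLoc O M) {a b : F} (ha : M a) (hb : b ∈ O) : M (a * b) := by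
  rw [mul_comm]; exact h.mul _ _ hb ha

lemma sub' (h : KnightLoc O M) {a b : F} (ha : M a) (hb : M b) : M (a - b) := by
  have := h.add _ _ ha (h.mul (-1) b (O.neg_mem O.one_mem) hb)
  rwa [neg_one_mul, ← sub_eq_add_neg] at this

lemma zero_of (h : KnightLoc O M) {a : F} (ha : M a) : M 0 := by
  simpa using h.sub' ha ha

lemma prime (h : KnightLoc O M) {a b : F} (ha : a ∈ O) (_hb : b ∈ O) (hab : M (a * b)) :
    M a ∨ M b := by
  by_cases h1 : M a
  · exact Or.inl h1
  · right
    by_cases h0 : a = 0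
    · subst h0
      exact absurd (by simpa using hab) h1
    have := h.mul _ _ (h.inv a ha h1) hab
    rwa [inv_mul_cancel_left₀ h0] at this

/-- If `α` is in the maximal ideal and `β` is a unit, everything is a unit. -/
lemma row_unit_alpha (h : KnightLoc O M) (h0 : M 0) {α β : F} (hα : M α)
    (hβ : β ∈ O ∧ ¬ M β) {y : ℕ → ℕ → F}
    (hini : ∀ a b : ℕ, a < 2 ∨ b < 1 → y a b ∈ O ∧ ¬ M (y a b))
    (hrec : ∀ i j : ℕ,
      y (i + 2) (j + 1) =
        (α * y (i + 2) j * y i (j + 1) + β * y (i + 1) (j + 1) * y (i + 1) j) / y i j) :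
    ∀ j i, y i j ∈ O ∧ ¬ M (y i j) := by
  intro j
  induction j with
  | zero => intro i; exact hini _ _ (by omega)
  | succ j ih =>
    intro i
    induction i using Nat.strong_induction_on with
    | _ i ihi =>
      rcases Nat.lt_or_ge i 2 with hi | hi
      · exact hini _ _ (by omega)
      obtain ⟨i, rfl⟩ := Nat.exists_eq_add_of_le' hi
      have e1 := ih (i+2)
      have e2 := ihi i (by omega)
      have e3 := ihi (i+1) (by omega)
      have e4 := ih (i+1)
      have e5 := ih i
      have hm : M (α * y (i + 2) j * y i (j + 1)) := h.mul' (h.mul' hα e1.1) e2.1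
      have hO : (α * y (i + 2) j * y i (j + 1) + β * y (i + 1) (j + 1) * y (i + 1) j) ∈ O :=
        O.add_mem (h.sub _ hm) (O.mul_mem (O.mul_mem hβ.1 e3.1) e4.1)
      have hy0 : y i j ≠ 0 := fun hh => e5.2 (hh ▸ h0)
      have hy : y (i+2) (j+1) ∈ O := by
        rw [hrec, div_eq_mul_inv]
        exact O.mul_mem hO (h.inv _ e5.1 e5.2)
      refine ⟨hy, fun hM => ?_⟩
      have key : β * y (i + 1) (j + 1) * y (i + 1) j
          = y (i+2) (j+1) * y i j - α * y (i + 2) j * y i (j + 1) := by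
        rw [hrec]; field_simp; ring
      have := h.sub' (h.mul' hM e5.1) hm
      rw [← key] at this
      rcases h.prime (O.mul_mem hβ.1 e3.1) e4.1 this with h1 | h1
      · rcases h.prime hβ.1 e3.1 h1 with h2 | h2
        · exact hβ.2 h2
        · exact e3.2 h2
      · exact e4.2 h1

lemma row_unit_beta (h : KnightLoc O M) (h0 : M 0) {α β : F} (hβ : M β)
    (hα : α ∈ O ∧ ¬ M α) {y : ℕ → ℕ → F}
    (hini : ∀ a b : ℕ, a < 2 ∨ b < 1 → y a b ∈ O ∧ ¬ M (y a b))
    (hrec : ∀ i j : ℕ,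
      y (i + 2) (j + 1) =
        (α * y (i + 2) j * y i (j + 1) + β * y (i + 1) (j + 1) * y (i + 1) j) / y i j) :
    ∀ j i, y i j ∈ O ∧ ¬ M (y i j) := by
  intro j
  induction j with
  | zero => intro i; exact hini _ _ (by omega)
  | succ j ih =>
    intro i
    induction i using Nat.strong_induction_on with
    | _ i ihi =>
      rcases Nat.lt_or_ge i 2 with hi | hi
      · exact hini _ _ (by omega)
      obtain ⟨i, rfl⟩ := Nat.exists_eq_add_of_le' hi
      have e1 := ih (i+2)
      have e2 := ihi i (by omega)
      have e3 := ihi (i+1) (by omega)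
      have e4 := ih (i+1)
      have e5 := ih i
      have hm : M (β * y (i + 1) (j + 1) * y (i + 1) j) := h.mul' (h.mul' hβ e3.1) e4.1
      have hO : (α * y (i + 2) j * y i (j + 1) + β * y (i + 1) (j + 1) * y (i + 1) j) ∈ O :=
        O.add_mem (O.mul_mem (O.mul_mem hα.1 e1.1) e2.1) (h.sub _ hm)
      have hy0 : y i j ≠ 0 := fun hh => e5.2 (hh ▸ h0)
      have hy : y (i+2) (j+1) ∈ O := by
        rw [hrec, div_eq_mul_inv]
        exact O.mul_mem hO (h.inv _ e5.1 e5.2)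
      refine ⟨hy, fun hM => ?_⟩
      have key : α * y (i + 2) j * y i (j + 1)
          = y (i+2) (j+1) * y i j - β * y (i + 1) (j + 1) * y (i + 1) j := by
        rw [hrec]; field_simp; ring
      have := h.sub' (h.mul' hM e5.1) hm
      rw [← key] at this
      rcases h.prime (O.mul_mem hα.1 e1.1) e2.1 this with h1 | h1
      · rcases h.prime hα.1 e1.1 h1 with h2 | h2
        · exact hα.2 h2
        · exact e1.2 h2
      · exact e2.2 h1

/-- Casoratian identity for two solutions of the same row recurrence. -/
lemma casoratian {α β : F} {r s z : ℕ → F} (hr : ∀ k, r k ≠ 0)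
    (hs : ∀ k, s (k+2) * r k = α * r (k+2) * s k + β * s (k+1) * r (k+1))
    (hz : ∀ k, z (k+2) * r k = α * r (k+2) * z k + β * z (k+1) * r (k+1))
    (h0 : z 0 = s 0 + s 1) (h1 : z 1 = s 1) (k : ℕ) :
    (s (k+1) * z k - s k * z (k+1)) * r 0 * r 1 = (-α)^k * (s 1)^2 * (r (k+1) * r k) := by
  induction k with
  | zero => simp only [h0, h1, zero_add]; ring
  | succ k ih =>
    apply mul_right_cancel₀ (hr k)
    have e1 := hs k
    have e2 := hz k
    rw [pow_succ]
    linear_combination (z (k+1) * r 0 * r 1) * e1 - (s (k+1) * r 0 * r 1) * e2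
      - α * r (k+2) * ih

/-- The numerator congruence behind the knight recurrence. -/
lemma knight_identity {α β : F} {y : ℕ → ℕ → F} (hy0 : ∀ i j, y i j ≠ 0)
    (hrec : ∀ i j : ℕ, y (i + 2) (j + 1) * y i j =
        α * y (i + 2) j * y i (j + 1) + β * y (i + 1) (j + 1) * y (i + 1) j) (i j : ℕ) :
    y (i+4) (j+2) * (y (i+2) j * y i (j+1) * y (i+1) (j+1) * y (i+1) j) =
      α * α * y (i+4) j * y (i+2) (j+2) * y i (j+1) * y (i+1) (j+1) * y (i+1) j
      + α * α * β * y (i+3) (j+1) * y (i+3) j * y i (j+2) * y (i+1) (j+1) * y (i+1) j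
      + β * β * y (i+2) (j+2) * y (i+3) (j+1) * y (i+2) j * y i (j+1) * y (i+1) j
      + α * β * y (i+3) (j+1) * y (i+1) (j+2) * (y (i+3) j * y (i+1) (j+1) * y i j
        + β * y (i+2) j * y (i+2) j * y i (j+1)) := by
  have R0 := hrec (i+2) (j+1)
  have R1 := hrec (i+2) j
  have R2 := hrec i (j+1)
  have R3 := hrec (i+1) (j+1)
  have R4 := hrec (i+1) j
  have R5 := hrec i j
  simp only [add_assoc, Nat.reduceAdd] at R0 R1 R2 R3 R4 R5
  apply mul_right_cancel₀ (hy0 (i+2) (j+1))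
  generalize y (i+2) (j+1) = D at *
  generalize y (i+4) (j+2) = n at *
  generalize y (i+4) (j+1) = a at *
  generalize y (i+2) (j+2) = b at *
  generalize y (i+3) (j+2) = c at *
  generalize y (i+3) (j+1) = d at *
  generalize y (i+2) j = e1 at *
  generalize y i (j+1) = e2 at *
  generalize y (i+1) (j+1) = e3 at *
  generalize y (i+1) j = e4 at *
  generalize y (i+3) j = f1 at *
  generalize y (i+1) (j+2) = f2 at *
  generalize y (i+4) j = g1 at *
  generalize y i (j+2) = g2 at *
  generalize y i j = h at *
  linear_combination (e1*e2*e3*e4) * R0 + (α * b * e2 * e3 * e4) * R1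
    + (α * β * d * f1 * e3 * e4) * R2 + (β * d * e1 * e2 * e4) * R3
    + (α * β * d * f2 * e1 * e2) * R4 - (α * β * d * f2 * f1 * e3) * R5

/-- Main local statement when `α`, `β` are units. -/
lemma row_main (h : KnightLoc O M) {α β : F}
    (hα : α ∈ O ∧ ¬ M α) (hβ : β ∈ O ∧ ¬ M β) {y : ℕ → ℕ → F} (hy0 : ∀ i j, y i j ≠ 0)
    (hini : ∀ a b : ℕ, a < 2 ∨ b < 1 → y a b ∈ O ∧ ¬ M (y a b))
    (hrec : ∀ i j : ℕ, y (i + 2) (j + 1) * y i j =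
        α * y (i + 2) j * y i (j + 1) + β * y (i + 1) (j + 1) * y (i + 1) j)
    (H : ∀ j k, M (y k j) → ∃ σ : F →+* F, (∀ z ∈ O, σ z ∈ O) ∧ (∀ z, M z → M (σ z)) ∧
      σ α = α ∧ σ β = β ∧ (∀ k, σ (y k j) = y k j) ∧
      σ (y 0 (j+1)) = y 0 (j+1) + y 1 (j+1) ∧ σ (y 1 (j+1)) = y 1 (j+1)) :
    ∀ j, (∀ k, y k j ∈ O) ∧ (∀ k, M (y k j) → ¬ M (y (k+1) j)) ∧
      (∀ k, M (y k j) → ¬ M (y (k+2) j)) ∧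
      (∀ j', j = j' + 1 → (∀ k, y k j' ∈ O) ∧ (∀ k, M (y k j') → ¬ M (y k j)) ∧
        (∀ k, M (y k j') → ¬ M (y (k+1) j))) := by
  intro j
  induction j with
  | zero =>
    exact ⟨fun k => (hini k 0 (by omega)).1, fun k hk => absurd hk (hini k 0 (by omega)).2,
      fun k hk => absurd hk (hini k 0 (by omega)).2, fun j' hj => by omega⟩
  | succ j ih =>
    obtain ⟨hO, hA, hD, hprev⟩ := ih
    -- division by a unit
    have hdiv : ∀ a b : F, b ∈ O → ¬ M b → b ≠ 0 → a * b ∈ O → a ∈ O := by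
      intro a b hb hMb hb0 hab
      have := O.mul_mem hab (h.inv b hb hMb)
      rwa [mul_inv_cancel_right₀ hb0] at this
    -- integrality of the next row
    have hL : ∀ k, y k (j+1) ∈ O := by
      intro k
      induction k using Nat.strong_induction_on with
      | _ k ihk =>
        rcases Nat.lt_or_ge k 2 with hk | hk
        · exact (hini _ _ (by omega)).1
        obtain ⟨k, rfl⟩ := Nat.exists_eq_add_of_le' hk
        by_cases hM : M (y k j)
        · have hkj : ¬ (k < 2 ∨ j < 1) := fun hh => (hini _ _ hh).2 hM
          obtain ⟨i, rfl⟩ : ∃ i, k = i + 2 := ⟨k - 2, by omega⟩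
          obtain ⟨l, rfl⟩ : ∃ l, j = l + 1 := ⟨j - 1, by omega⟩
          obtain ⟨hO', hB, hC⟩ := hprev l rfl
          have n1 : ¬ M (y (i+2) l) := fun hh => hB _ hh hM
          have n2 : ¬ M (y i (l+1)) := fun hh => hD _ hh hM
          have n3 : ¬ M (y (i+1) (l+1)) := fun hh => hA _ hh hM
          have n4 : ¬ M (y (i+1) l) := fun hh => hC _ hh hM
          have key := knight_identity hy0 hrec i l
          have hmem : y (i+4) (l+2) * (y (i+2) l * y i (l+1) * y (i+1) (l+1) * y (i+1) l) ∈ O →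
              y (i+4) (l+2) ∈ O := by
            refine hdiv _ _ ?_ ?_ ?_
            · exact O.mul_mem (O.mul_mem (O.mul_mem (hO' _) (hO _)) (hO _)) (hO' _)
            · intro hh
              rcases h.prime (O.mul_mem (O.mul_mem (hO' _) (hO _)) (hO _)) (hO' _) hh with h1 | h1
              · rcases h.prime (O.mul_mem (hO' _) (hO _)) (hO _) h1 with h2 | h2
                · rcases h.prime (hO' _) (hO _) h2 with h3 | h3
                  · exact n1 h3
                  · exact n2 h3
                · exact n3 h2
              · exact n4 h1
            · exact mul_ne_zero (mul_ne_zero (mul_ne_zero (hy0 _ _) (hy0 _ _)) (hy0 _ _)) (hy0 _ _)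
          · apply hmem
            rw [key]
            have q1 : y (i+2) (l+2) ∈ O := ihk (i+2) (by omega)
            have q2 : y i (l+2) ∈ O := ihk i (by omega)
            have q3 : y (i+1) (l+2) ∈ O := ihk (i+1) (by omega)
            have p1 := hO' i
            have p2 := hO' (i+1)
            have p3 := hO' (i+2)
            have p4 := hO' (i+3)
            have p5 := hO' (i+4)
            have p6 := hO i
            have p7 := hO (i+1)
            have p8 := hO (i+3)
            have p9 := hα.1
            have p10 := hβ.1
            repeat' first
              | assumption
              | apply O.add_mem
              | apply O.mul_mem
        · refine hdiv _ (y k j) (hO k) hM (hy0 _ _) ?_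
          rw [hrec]
          exact O.add_mem (O.mul_mem (O.mul_mem hα.1 (hO _)) (ihk k (by omega)))
            (O.mul_mem (O.mul_mem hβ.1 (ihk (k+1) (by omega))) (hO _))
    have hE : ∀ k, M (y k (j+1)) → ¬ M (y (k+1) j) := by
      intro k h1 h2
      rcases Nat.lt_or_ge k 1 with hk | hk
      · exact (hini _ _ (by omega)).2 h1
      obtain ⟨k, rfl⟩ := Nat.exists_eq_add_of_le' hk
      obtain ⟨σ, σO, σM, σα, σβ, σr, σ0, σ1⟩ := H j (k+1+1) h2
      have cas := casoratian (α := α) (β := β) (r := fun k => y k j) (s := fun k => y k (j+1))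
        (z := fun k => σ (y k (j+1))) (fun k => hy0 k j) (fun k => hrec k j)
        (fun k => by
          have := congrArg σ (hrec k j)
          simpa only [map_mul, map_add, σα, σβ, σr] using this) σ0 σ1 k
      have hW : M ((y (k+1) (j+1) * σ (y k (j+1)) - y k (j+1) * σ (y (k+1) (j+1))) * y 0 j * y 1 j) :=
        h.mul' (h.mul' (h.sub' (h.mul' h1 (σO _ (hL k))) (h.mul _ _ (hL k) (σM _ h1))) (hO 0)) (hO 1)
      rw [cas] at hW
      have hs1 := hini 1 (j+1) (by omega)
      have hαk : ∀ n : ℕ, ((-α)^n) ∈ O ∧ ¬ M ((-α)^n) := by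
        intro n
        induction n with
        | zero => exact ⟨by rw [pow_zero]; exact O.one_mem, by rw [pow_zero]; exact h.one⟩
        | succ n ihn =>
          refine ⟨O.pow_mem (O.neg_mem hα.1) _, fun hh => ?_⟩
          rw [pow_succ] at hh
          rcases h.prime ihn.1 (O.neg_mem hα.1) hh with h3 | h3
          · exact ihn.2 h3
          · have := h.mul (-1) _ (O.neg_mem O.one_mem) h3
            exact hα.2 (by simpa using this)
      rcases h.prime (O.mul_mem (hαk k).1 (O.pow_mem hs1.1 2)) (O.mul_mem (hO _) (hO _)) hW
        with h3 | h3
      · rcases h.prime (hαk k).1 (O.pow_mem hs1.1 2) h3 with h4 | h4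
        · exact (hαk k).2 h4
        · rw [pow_two] at h4
          rcases h.prime hs1.1 hs1.1 h4 with h5 | h5 <;> exact hs1.2 h5
      · rcases h.prime (hO _) (hO _) h3 with h4 | h4
        · exact hA _ h4 h2
        · exact hD _ h4 h2
    -- reading off the recurrence modulo the maximal ideal
    have hα' : ∀ a b, a ∈ O → b ∈ O → M (α * a * b) → M a ∨ M b := by
      intro a b ha hb hh
      rcases h.prime (O.mul_mem hα.1 ha) hb hh with h1 | h1
      · rcases h.prime hα.1 ha h1 with h2 | h2
        · exact absurd h2 hα.2
        · exact Or.inl h2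
      · exact Or.inr h1
    have hβ' : ∀ a b, a ∈ O → b ∈ O → M (β * a * b) → M a ∨ M b := by
      intro a b ha hb hh
      rcases h.prime (O.mul_mem hβ.1 ha) hb hh with h1 | h1
      · rcases h.prime hβ.1 ha h1 with h2 | h2
        · exact absurd h2 hβ.2
        · exact Or.inl h2
      · exact Or.inr h1
    have recα : ∀ k, M (y (k+2) (j+1)) → M (β * y (k + 1) (j + 1) * y (k + 1) j) →
        M (y (k+2) j) ∨ M (y k (j+1)) := by
      intro k h1 h2
      apply hα' _ _ (hO _) (hL _)
      have := h.sub' (h.mul' h1 (hO k)) h2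
      rwa [hrec, add_sub_cancel_right] at this
    have recβ : ∀ k, M (y (k+2) (j+1)) → M (α * y (k + 2) j * y k (j + 1)) →
        M (y (k+1) (j+1)) ∨ M (y (k+1) j) := by
      intro k h1 h2
      apply hβ' _ _ (hL _) (hO _)
      have := h.sub' (h.mul' h1 (hO k)) h2
      rwa [hrec, add_sub_cancel_left] at this
    have hA' : ∀ k, M (y k (j+1)) → ¬ M (y (k+1) (j+1)) := by
      intro k
      induction k with
      | zero => intro h1; exact absurd h1 (hini _ _ (by omega)).2
      | succ k ihk =>
        intro h1 h2
        rcases recα k h2 (h.mul' (h.mul _ _ hβ.1 h1) (hO _)) with h3 | h3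
        · exact hE _ h1 h3
        · exact ihk h3 h1
    refine ⟨hL, hA', ?_, ?_⟩
    · intro k h1 h2
      rcases recβ k h2 (h.mul _ _ (O.mul_mem hα.1 (hO _)) h1) with h3 | h3
      · exact hA' _ h1 h3
      · exact hE _ h1 h3
    · intro j' hj
      obtain rfl : j = j' := by omega
      refine ⟨hO, ?_, ?_⟩
      · intro k h1 h2
        rcases Nat.lt_or_ge k 2 with hk | hk
        · exact (hini _ _ (by omega)).2 h1
        obtain ⟨k, rfl⟩ := Nat.exists_eq_add_of_le' hk
        rcases recβ k h2 (h.mul' (h.mul _ _ hα.1 h1) (hL _)) with h3 | h3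
        · exact hE _ h3 h1
        · exact hA _ h3 h1
      · intro k h1 h2
        rcases Nat.lt_or_ge k 1 with hk | hk
        · exact (hini _ _ (by omega)).2 h1
        obtain ⟨k, rfl⟩ := Nat.exists_eq_add_of_le' hk
        rcases recα k h2 (h.mul _ _ (O.mul_mem hβ.1 (hL _)) h1) with h3 | h3
        · exact hA _ h1 h3
        · exact hE _ h3 h1

end KnightLoc

section PAdic

variable {σ : Type*} {F : Type*} [Field F] [Algebra (MvPolynomial σ ℤ) F]
  [IsFractionRing (MvPolynomial σ ℤ) F]

local notation "ι" => algebraMap (MvPolynomial σ ℤ) F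

/-- The local ring of the polynomial ring at a prime element, inside the fraction field. -/
def knightO (F : Type*) [Field F] [Algebra (MvPolynomial σ ℤ) F] (p : MvPolynomial σ ℤ)
    (hp : Prime p) : Subring F where
  carrier := {z | ∃ f g : MvPolynomial σ ℤ, ¬ p ∣ g ∧
    z * algebraMap (MvPolynomial σ ℤ) F g = algebraMap (MvPolynomial σ ℤ) F f}
  zero_mem' := ⟨0, 1, fun h => hp.not_isUnit (isUnit_of_dvd_one h), by simp⟩
  one_mem' := ⟨1, 1, fun h => hp.not_isUnit (isUnit_of_dvd_one h), by simp⟩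
  add_mem' := by
    rintro a b ⟨f, g, hg, h⟩ ⟨f', g', hg', h'⟩
    refine ⟨f * g' + f' * g, g * g', fun hh => (hp.dvd_or_dvd hh).elim hg hg', ?_⟩
    simp only [map_mul, map_add, ← h, ← h']; ring
  mul_mem' := by
    rintro a b ⟨f, g, hg, h⟩ ⟨f', g', hg', h'⟩
    refine ⟨f * f', g * g', fun hh => (hp.dvd_or_dvd hh).elim hg hg', ?_⟩
    simp only [map_mul, ← h, ← h']; ring
  neg_mem' := by
    rintro a ⟨f, g, hg, h⟩
    exact ⟨-f, g, hg, by simp only [map_neg, ← h]; ring⟩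

/-- The maximal ideal of `knightO`. -/
def knightM (F : Type*) [Field F] [Algebra (MvPolynomial σ ℤ) F] (p : MvPolynomial σ ℤ)
    (z : F) : Prop :=
  ∃ f g : MvPolynomial σ ℤ, p ∣ f ∧ ¬ p ∣ g ∧
    z * algebraMap (MvPolynomial σ ℤ) F g = algebraMap (MvPolynomial σ ℤ) F f



lemma knight_inj {f g : MvPolynomial σ ℤ} (h : ι f = ι g) : f = g :=
  IsFractionRing.injective (MvPolynomial σ ℤ) F h

lemma knight_map_ne {f : MvPolynomial σ ℤ} (h : f ≠ 0) : ι f ≠ 0 := fun hh =>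
  h (knight_inj (F := F) (by rw [hh, map_zero]))

lemma knight_loc (p : MvPolynomial σ ℤ) (hp : Prime p) :
    KnightLoc (knightO F p hp) (knightM F p) where
  sub := by rintro a ⟨f, g, -, hg, h⟩; exact ⟨f, g, hg, h⟩
  add := by
    rintro a b ⟨f, g, hf, hg, h⟩ ⟨f', g', hf', hg', h'⟩
    refine ⟨f * g' + f' * g, g * g', dvd_add (hf.mul_right _) (hf'.mul_right _),
      fun hh => (hp.dvd_or_dvd hh).elim hg hg', ?_⟩
    simp only [map_mul, map_add, ← h, ← h']; ring
  mul := by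
    rintro a b ⟨f, g, hg, h⟩ ⟨f', g', hf', hg', h'⟩
    refine ⟨f * f', g * g', hf'.mul_left _, fun hh => (hp.dvd_or_dvd hh).elim hg hg', ?_⟩
    simp only [map_mul, ← h, ← h']; ring
  one := by
    rintro ⟨f, g, hf, hg, h⟩
    rw [one_mul] at h
    exact hg (knight_inj h ▸ hf)
  inv := by
    rintro a ⟨f, g, hg, h⟩ hM
    have hf : ¬ p ∣ f := fun hf => hM ⟨f, g, hf, hg, h⟩
    refine ⟨g, f, hf, ?_⟩
    by_cases ha : a = 0
    · subst ha
      rw [zero_mul] at h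
      exact absurd (knight_inj (F := F) (f := f) (g := 0) (by rw [← h, map_zero]) ▸ dvd_zero p) hf
    · rw [← h, inv_mul_cancel_left₀ ha]

lemma knight_map_mem {p : MvPolynomial σ ℤ} (hp : Prime p) (f : MvPolynomial σ ℤ) :
    ι f ∈ knightO F p hp :=
  ⟨f, 1, fun h => hp.not_isUnit (isUnit_of_dvd_one h), by simp⟩

lemma knight_map_M {p : MvPolynomial σ ℤ} (hp : Prime p) (f : MvPolynomial σ ℤ) :
    knightM F p (ι f) ↔ p ∣ f := by
  constructor
  · rintro ⟨f', g, hf, hg, h⟩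
    rw [← map_mul] at h
    have := knight_inj h
    exact (hp.dvd_or_dvd (this ▸ hf)).resolve_right hg
  · intro h
    exact ⟨f, 1, h, fun h => hp.not_isUnit (isUnit_of_dvd_one h), by simp⟩

/-- Quotients of polynomials not involving the variables outside `S`. -/
def knightT (F : Type*) [Field F] [Algebra (MvPolynomial σ ℤ) F] (S : Set σ) (z : F) : Prop :=
  ∃ f ∈ supported ℤ S, ∃ g ∈ supported ℤ S, g ≠ 0 ∧
    z * algebraMap (MvPolynomial σ ℤ) F g = algebraMap (MvPolynomial σ ℤ) F f

lemma knightT_add {S : Set σ} {a b : F} (ha : knightT F S a) (hb : knightT F S b) :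
    knightT F S (a + b) := by
  obtain ⟨f, hf, g, hg, h0, h⟩ := ha
  obtain ⟨f', hf', g', hg', h0', h'⟩ := hb
  refine ⟨f * g' + f' * g, add_mem (mul_mem hf hg') (mul_mem hf' hg), g * g', mul_mem hg hg',
    mul_ne_zero h0 h0', ?_⟩
  simp only [map_mul, map_add, ← h, ← h']; ring

lemma knightT_mul {S : Set σ} {a b : F} (ha : knightT F S a) (hb : knightT F S b) :
    knightT F S (a * b) := by
  obtain ⟨f, hf, g, hg, h0, h⟩ := ha
  obtain ⟨f', hf', g', hg', h0', h'⟩ := hb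
  refine ⟨f * f', mul_mem hf hf', g * g', mul_mem hg hg', mul_ne_zero h0 h0', ?_⟩
  simp only [map_mul, ← h, ← h']; ring

lemma knightT_inv {S : Set σ} {a : F} (ha : knightT F S a) (ha0 : a ≠ 0) :
    knightT F S a⁻¹ := by
  obtain ⟨f, hf, g, hg, h0, h⟩ := ha
  refine ⟨g, hg, f, hf, ?_, ?_⟩
  · rintro rfl
    rw [map_zero] at h
    exact mul_ne_zero ha0 (knight_map_ne h0) h
  · rw [← h, inv_mul_cancel_left₀ ha0]

lemma knightT_X {S : Set σ} {s : σ} (hs : s ∈ S) : knightT F S (ι (X s)) :=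
  ⟨X s, X_mem_supported.2 hs, 1, one_mem _, one_ne_zero, by simp⟩

lemma knight_dvd_supported {S : Set σ} {p f : MvPolynomial σ ℤ} (hf : f ∈ supported ℤ S)
    (h0 : f ≠ 0) (h : p ∣ f) : p ∈ supported ℤ S := by
  classical
  obtain ⟨q, rfl⟩ := h
  rw [mem_supported] at hf ⊢
  intro s hs
  apply hf
  have hp0 := left_ne_zero_of_mul h0
  have hq0 := right_ne_zero_of_mul h0
  have key := degreeOf_mul_eq (n := s) hp0 hq0
  by_contra hcon
  have hz : degreeOf s (p * q) = 0 := by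
    rw [degreeOf_def, Multiset.count_eq_zero]
    intro hh
    exact hcon (by simpa [vars_def] using hh)
  have : degreeOf s p ≠ 0 := by
    rw [degreeOf_def, Multiset.count_ne_zero]
    simpa [vars_def] using hs
  omega

/-- The substitution `X s ↦ X s + X t`. -/
noncomputable def knightSub [DecidableEq σ] (s t : σ) (c : MvPolynomial σ ℤ) :
    MvPolynomial σ ℤ →ₐ[ℤ] MvPolynomial σ ℤ :=
  aeval (fun u => if u = s then X s + c * X t else X u)

lemma knightSub_comp [DecidableEq σ] (s t : σ) (hst : t ≠ s) (c d : ℤ) (hcd : c + d = 0) :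
    (knightSub s t (C c)).comp (knightSub s t (C d)) = AlgHom.id ℤ (MvPolynomial σ ℤ) := by
  apply algHom_ext
  intro u
  have hC : (C c + C d : MvPolynomial σ ℤ) = 0 := by rw [← map_add, hcd, map_zero]
  by_cases hu : u = s
  · subst hu
    have hCd : knightSub u t (C c) (C d) = C d := by
      simp [knightSub]
    simp only [AlgHom.comp_apply, AlgHom.id_apply]
    have h1 : knightSub u t (C d) (X u) = X u + C d * X t := by simp [knightSub]
    have h2 : knightSub u t (C c) (X u) = X u + C c * X t := by simp [knightSub]
    have h3 : knightSub u t (C c) (X t) = X t := by simp [knightSub, hst]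
    rw [h1, map_add, map_mul, h2, h3, hCd]
    linear_combination (X t) * hC
  · simp [knightSub, hu]

/-- The substitution as an automorphism. -/
noncomputable def knightEquiv [DecidableEq σ] (s t : σ) (hst : t ≠ s) :
    MvPolynomial σ ℤ ≃ₐ[ℤ] MvPolynomial σ ℤ :=
  AlgEquiv.ofAlgHom (knightSub s t (C 1)) (knightSub s t (C (-1)))
    (knightSub_comp s t hst 1 (-1) (by norm_num)) (knightSub_comp s t hst (-1) 1 (by norm_num))

lemma knightEquiv_X [DecidableEq σ] (s t : σ) (hst : t ≠ s) (u : σ) :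
    knightEquiv s t hst (X u) = if u = s then X s + X t else X u := by
  simp [knightEquiv, knightSub]

lemma knightEquiv_fix [DecidableEq σ] (s t : σ) (hst : t ≠ s) {p : MvPolynomial σ ℤ}
    (hp : p ∈ supported ℤ {u | u ≠ s}) : knightEquiv s t hst p = p := by
  rw [mem_supported] at hp
  have := hom_congr_vars (f₁ := (knightEquiv s t hst : MvPolynomial σ ℤ →+* MvPolynomial σ ℤ))
    (f₂ := RingHom.id _) (p₁ := p) (p₂ := p) (by ext; simp) (by
      intro u hu _
      have : u ≠ s := hp hu
      simp [knightEquiv_X, this]) rfl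
  simpa using this

lemma knight_auto (s t : σ) (hst : t ≠ s) (p : MvPolynomial σ ℤ) (hp : Prime p) (a : F)
    (ha0 : a ≠ 0) (haT : knightT F {u | u ≠ s} a) (haM : knightM F p a) :
    ∃ τ : F →+* F, (∀ z ∈ knightO F p hp, τ z ∈ knightO F p hp) ∧
      (∀ z, knightM F p z → knightM F p (τ z)) ∧ τ (ι (X s)) = ι (X s) + ι (X t) ∧
      ∀ u, u ≠ s → τ (ι (X u)) = ι (X u) := by
  classical
  obtain ⟨f, hf, g, hg, h0, h⟩ := haT
  obtain ⟨f', g', hf', hg', h'⟩ := haM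
  have hpf : p ∣ f := by
    have : f * g' = f' * g := by
      apply knight_inj (F := F)
      rw [map_mul, map_mul, ← h, ← h']; ring
    exact (hp.dvd_or_dvd (this ▸ hf'.mul_right g : p ∣ f * g')).resolve_right hg'
  have hf0 : f ≠ 0 := by
    rintro rfl
    rw [map_zero] at h
    exact mul_ne_zero ha0 (knight_map_ne h0) h
  have hpS := knight_dvd_supported hf hf0 hpf
  have hfix := knightEquiv_fix s t hst hpS
  set φ := knightEquiv s t hst with hφ
  have hdvd : ∀ q, p ∣ φ q ↔ p ∣ q := by
    intro q
    constructor
    · intro hh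
      have := map_dvd φ.symm hh
      rw [AlgEquiv.symm_apply_apply] at this
      rwa [show φ.symm p = p by rw [AlgEquiv.symm_apply_eq, hfix]] at this
    · intro hh
      have := map_dvd φ hh
      rwa [hfix] at this
  let τ : F ≃+* F := IsFractionRing.ringEquivOfRingEquiv φ.toRingEquiv
  have hτ : ∀ q, τ (ι q) = ι (φ q) := fun q =>
    IsFractionRing.ringEquivOfRingEquiv_algebraMap φ.toRingEquiv q
  refine ⟨τ, ?_, ?_, ?_, ?_⟩
  · rintro z ⟨q, r, hr, hz⟩
    refine ⟨φ q, φ r, by rwa [hdvd], ?_⟩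
    rw [← hτ, ← hτ, ← hz, map_mul]; rfl
  · rintro z ⟨q, r, hq, hr, hz⟩
    refine ⟨φ q, φ r, by rwa [hdvd], by rwa [hdvd], ?_⟩
    rw [← hτ, ← hτ, ← hz, map_mul]; rfl
  · show τ _ = _
    rw [hτ, knightEquiv_X, if_pos rfl, map_add]
  · intro u hu
    show τ _ = _
    rw [hτ, knightEquiv_X, if_neg hu]

/-- An element integral at all primes other than the variables in `S` is a Laurent polynomial
in those variables. -/
lemma knight_global (A : Subalgebra ℤ F) (S : Set σ) (hX : ∀ s, ι (X s) ∈ A)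
    (hXi : ∀ s ∈ S, (ι (X s))⁻¹ ∈ A) (z : F)
    (hz : ∀ p (hp : Prime p), (∀ s ∈ S, ¬ p ∣ X s) → z ∈ knightO F p hp) : z ∈ A := by
  have hA : ∀ f, ι f ∈ A := by
    intro f
    induction f using MvPolynomial.induction_on with
    | C a =>
      have : ι (C a) = algebraMap ℤ F a := by
        simp
      rw [this]; exact A.algebraMap_mem a
    | add p q hp hq => rw [map_add]; exact A.add_mem hp hq
    | mul_X p s hp => rw [map_mul]; exact A.mul_mem hp (hX s)
  have hinv : ∀ g : MvPolynomial σ ℤ, g ≠ 0 → (∀ p, Prime p → p ∣ g → ∃ s ∈ S, p ∣ X s) →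
      (ι g)⁻¹ ∈ A := by
    intro g
    induction g using UniqueFactorizationMonoid.induction_on_prime with
    | h₁ => intro h; exact absurd rfl h
    | h₂ u hu =>
      intro _ _
      obtain ⟨v, hv⟩ := hu.exists_right_inv
      have : (ι u)⁻¹ = ι v := inv_eq_of_mul_eq_one_right (by rw [← map_mul, hv, map_one])
      rw [this]; exact hA v
    | h₃ a p ha hp ih =>
      intro _ h
      obtain ⟨s, hs, q, hq⟩ := h p hp (dvd_mul_right _ _)
      have h1 := ih ha (fun r hr hra => h r hr (hra.mul_left _))
      have h2 : (ι p)⁻¹ = (ι (X s))⁻¹ * ι q := by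
        have hq0 : q ≠ 0 := by
          rintro rfl
          exact X_ne_zero s (by rw [hq, mul_zero])
        have := knight_map_ne (F := F) hq0
        have := knight_map_ne (F := F) hp.ne_zero
        rw [hq, map_mul]; field_simp
      rw [map_mul, mul_inv, h2]
      exact A.mul_mem (A.mul_mem (hXi s hs) (hA q)) h1
  obtain ⟨f, ⟨g, hg⟩, hfg, hzz⟩ := IsFractionRing.exists_reduced_fraction (A := MvPolynomial σ ℤ) z
  have hg0 : g ≠ 0 := nonZeroDivisors.ne_zero hg
  have hιg := knight_map_ne (F := F) hg0
  have hz' : z = ι f * (ι g)⁻¹ := by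
    rw [← hzz, IsFractionRing.mk'_eq_div, div_eq_mul_inv]
  rw [hz']
  refine A.mul_mem (hA f) (hinv g hg0 ?_)
  intro p hp hpg
  by_contra hcon
  push Not at hcon
  obtain ⟨f', g', hg', h'⟩ := hz p hp hcon
  have heq : f * g' = f' * g := by
    apply knight_inj (F := F)
    rw [map_mul, map_mul, ← h', hz']; field_simp
  have hpf : p ∣ f := (hp.dvd_or_dvd (heq ▸ hpg.mul_left f' : p ∣ f * g')).resolve_right hg'
  exact hp.not_isUnit (hfg hpf hpg)

end PAdic

/-- Elkies's knight recurrence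
y_{i,j} y_{i−2,j−1} = α y_{i,j−1} y_{i−2,j} + β y_{i−1,j} y_{i−1,j−1}
on ℤ≥0² exhibits the Laurent phenomenon over ℤ[α,β]. -/
theorem knight_recurrence_laurent
    (F : Type*) [Field F] [Algebra (MvPolynomial (KnightInit ⊕ Fin 2) ℤ) F]
    [IsFractionRing (MvPolynomial (KnightInit ⊕ Fin 2) ℤ) F]
    (x : KnightInit ⊕ Fin 2 → F)
    (hx : ∀ s, x s = algebraMap (MvPolynomial (KnightInit ⊕ Fin 2) ℤ) F (X s))
    (α β : F) (hα : α = x (Sum.inr 0)) (hβ : β = x (Sum.inr 1))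
    (y : ℕ → ℕ → F)
    (hinit : ∀ a b : ℕ, ∀ h : a < 2 ∨ b < 1, y a b = x (Sum.inl ⟨(a, b), h⟩))
    (hrec : ∀ i j : ℕ,
      y (i + 2) (j + 1) =
        (α * y (i + 2) j * y i (j + 1) + β * y (i + 1) (j + 1) * y (i + 1) j) / y i j) :
    ∀ i j : ℕ, y i j ∈ Algebra.adjoin ℤ
      (Set.range (fun s : KnightInit => x (Sum.inl s)) ∪
       Set.range (fun s : KnightInit => (x (Sum.inl s))⁻¹) ∪ {α, β}) := by
  classical
  obtain rfl : x = fun s => algebraMap (MvPolynomial (KnightInit ⊕ Fin 2) ℤ) F (X s) := funext hx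
  simp only at hα hβ hinit ⊢
  have hXne : ∀ s t : KnightInit ⊕ Fin 2, s ≠ t →
      ¬ (X s : MvPolynomial (KnightInit ⊕ Fin 2) ℤ) ∣ X t := by
    intro s t hst h
    exact hst (X_dvd_X.1 h)
  -- nonzero divisors among the initial data at a prime `p`
  have hini : ∀ (p : MvPolynomial (KnightInit ⊕ Fin 2) ℤ) (hp : Prime p), (∀ s : KnightInit, ¬ p ∣ X (Sum.inl s)) →
      ∀ a b : ℕ, a < 2 ∨ b < 1 → y a b ∈ knightO F p hp ∧ ¬ knightM F p (y a b) := by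
    intro p hp hps a b hab
    rw [hinit a b hab]
    exact ⟨knight_map_mem hp _, by rw [knight_map_M hp]; exact hps _⟩
  have h01 : (Sum.inr 0 : KnightInit ⊕ Fin 2) ≠ Sum.inr 1 := by simp
  have hM0 : ∀ p : MvPolynomial (KnightInit ⊕ Fin 2) ℤ, Prime p → knightM F p 0 := by
    intro p hp
    rw [← map_zero (algebraMap (MvPolynomial (KnightInit ⊕ Fin 2) ℤ) F), knight_map_M hp]
    exact dvd_zero _
  have hcaseα : ∀ (p : MvPolynomial (KnightInit ⊕ Fin 2) ℤ) (hp : Prime p), (∀ s : KnightInit, ¬ p ∣ X (Sum.inl s)) →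
      p ∣ X (Sum.inr 0) → ∀ j i, y i j ∈ knightO F p hp ∧ ¬ knightM F p (y i j) := by
    intro p hp hps hpα
    refine (knight_loc p hp).row_unit_alpha (hM0 p hp) (α := α) (β := β) ?_ ?_ (hini p hp hps) hrec
    · rw [hα, knight_map_M hp]; exact hpα
    · rw [hβ, knight_map_M hp]
      refine ⟨knight_map_mem hp _, fun hh => ?_⟩
      exact hXne _ _ h01 ((hp.associated_of_dvd X_prime hpα).symm.dvd.trans hh)
  have hcaseβ : ∀ (p : MvPolynomial (KnightInit ⊕ Fin 2) ℤ) (hp : Prime p), (∀ s : KnightInit, ¬ p ∣ X (Sum.inl s)) →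
      p ∣ X (Sum.inr 1) → ∀ j i, y i j ∈ knightO F p hp ∧ ¬ knightM F p (y i j) := by
    intro p hp hps hpβ
    refine (knight_loc p hp).row_unit_beta (hM0 p hp) (α := α) (β := β) ?_ ?_ (hini p hp hps) hrec
    · rw [hβ, knight_map_M hp]; exact hpβ
    · rw [hα, knight_map_M hp]
      refine ⟨knight_map_mem hp _, fun hh => ?_⟩
      exact hXne _ _ h01.symm ((hp.associated_of_dvd X_prime hpβ).symm.dvd.trans hh)
  -- nonvanishing
  have hy0 : ∀ i j, y i j ≠ 0 := by
    intro i j h0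
    have hp : Prime (X (Sum.inr 0) : MvPolynomial (KnightInit ⊕ Fin 2) ℤ) := X_prime
    have := (hcaseα _ hp (fun s => hXne _ _ (by simp)) dvd_rfl j i).2
    rw [h0] at this
    exact this (hM0 _ hp)
  have hrec' : ∀ i j : ℕ, y (i + 2) (j + 1) * y i j =
        α * y (i + 2) j * y i (j + 1) + β * y (i + 1) (j + 1) * y (i + 1) j := by
    intro i j
    rw [hrec, div_mul_cancel₀ _ (hy0 i j)]
  -- rows up to `j` only involve variables of rows up to `j`
  have hclos : ∀ (Q : F → Prop) (n : ℕ), (∀ a b, Q a → Q b → Q (a + b)) →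
      (∀ a b, Q a → Q b → Q (a * b)) → (∀ a, a ≠ 0 → Q a → Q a⁻¹) → Q α → Q β →
      (∀ a b, a < 2 ∨ b < 1 → b ≤ n → Q (y a b)) → ∀ j, j ≤ n → ∀ i, Q (y i j) := by
    intro Q n hadd hmul hinv hQα hQβ hQi j
    induction j with
    | zero => intro _ i; exact hQi _ _ (by omega) (by omega)
    | succ j ih =>
      intro hj i
      have ih := ih (by omega)
      induction i using Nat.strong_induction_on with
      | _ i ihi =>
        rcases Nat.lt_or_ge i 2 with hi | hi
        · exact hQi _ _ (by omega) hj
        obtain ⟨i, rfl⟩ := Nat.exists_eq_add_of_le' hi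
        rw [hrec, div_eq_mul_inv]
        exact hmul _ _ (hadd _ _ (hmul _ _ (hmul _ _ hQα (ih _)) (ihi _ (by omega)))
          (hmul _ _ (hmul _ _ hQβ (ihi _ (by omega))) (ih _))) (hinv _ (hy0 _ _) (ih _))
  intro i j
  refine knight_global (σ := KnightInit ⊕ Fin 2) _ (Set.range Sum.inl) ?_ ?_ _ ?_
  · rintro (s | s)
    · exact Algebra.subset_adjoin (Or.inl (Or.inl ⟨s, rfl⟩))
    · apply Algebra.subset_adjoin
      right
      fin_cases s
      · left; exact hα.symm
      · right; exact hβ.symm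
  · rintro _ ⟨s, rfl⟩
    exact Algebra.subset_adjoin (Or.inl (Or.inr ⟨s, rfl⟩))
  · intro p hp hps
    have hps' : ∀ s : KnightInit, ¬ p ∣ X (Sum.inl s) := fun s => hps _ ⟨s, rfl⟩
    by_cases hpα : p ∣ X (Sum.inr 0)
    · exact (hcaseα p hp hps' hpα j i).1
    by_cases hpβ : p ∣ X (Sum.inr 1)
    · exact (hcaseβ p hp hps' hpβ j i).1
    refine ((knight_loc p hp).row_main (α := α) (β := β) ?_ ?_ hy0 (hini p hp hps') hrec' ?_ j).1 i
    · rw [hα, knight_map_M hp]; exact ⟨knight_map_mem hp _, hpα⟩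
    · rw [hβ, knight_map_M hp]; exact ⟨knight_map_mem hp _, hpβ⟩
    intro n k hM
    have hlt : ∀ a : ℕ, a < 2 → (a < 2 ∨ n + 1 < 1) := fun a ha => Or.inl ha
    let s0 : KnightInit := ⟨(0, n+1), Or.inl (by norm_num)⟩
    let s1 : KnightInit := ⟨(1, n+1), Or.inl (by norm_num)⟩
    have hs : ∀ a b (hab : a < 2 ∨ b < 1), (a, b) ≠ (0, n+1) →
        (Sum.inl ⟨(a, b), hab⟩ : KnightInit ⊕ Fin 2) ≠ Sum.inl s0 := by
      intro a b hab hne hh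
      exact hne (congrArg Subtype.val (Sum.inl.inj hh))
    have hs10 : (Sum.inl s1 : KnightInit ⊕ Fin 2) ≠ Sum.inl s0 :=
      hs 1 (n+1) (Or.inl (by norm_num)) (by simp)
    have hT : knightT F {u : KnightInit ⊕ Fin 2 | u ≠ Sum.inl s0} (y k n) := by
      refine hclos (knightT F {u : KnightInit ⊕ Fin 2 | u ≠ Sum.inl s0}) n
        (fun _ _ => knightT_add) (fun _ _ => knightT_mul) (fun _ h1 h2 => knightT_inv h2 h1)
        ?_ ?_ ?_ n le_rfl k
      · rw [hα]; exact knightT_X (by simp)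
      · rw [hβ]; exact knightT_X (by simp)
      · intro a b hab hb
        rw [hinit a b hab]
        exact knightT_X (hs a b hab (by rw [Ne, Prod.mk.injEq]; omega))
    obtain ⟨τ, τO, τM, τ0, τu⟩ :=
      knight_auto (Sum.inl s0) (Sum.inl s1) hs10 p hp (y k n) (hy0 _ _) hT hM
    have τα : τ α = α := by rw [hα]; exact τu _ (by simp)
    have τβ : τ β = β := by rw [hβ]; exact τu _ (by simp)
    refine ⟨τ, τO, τM, τα, τβ, ?_, ?_, ?_⟩
    · refine hclos (fun z => τ z = z) n ?_ ?_ ?_ τα τβ ?_ n le_rfl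
      · intro a b ha hb
        rw [map_add, ha, hb]
      · intro a b ha hb
        rw [map_mul, ha, hb]
      · intro a _ ha
        rw [map_inv₀, ha]
      · intro a b hab hb
        rw [hinit a b hab]
        exact τu _ (hs a b hab (by rw [Ne, Prod.mk.injEq]; omega))
    · rw [hinit 0 (n+1) (Or.inl (by norm_num)), hinit 1 (n+1) (Or.inl (by norm_num))]
      exact τ0
    · rw [hinit 1 (n+1) (Or.inl (by norm_num))]
      exact τu _ hs10
end

section
/- Let A be a UFD and P₁,…,Pₙ ∈ A[x₁,…,xₙ] nonzero polynomials such that: (1) each Pₖ does not depend on xₖ and is not divisible by any xᵢ; (2) for i ≠ j, P_{ji} := Pⱼ|_{xᵢ=0} and Pᵢ are coprime; (3) for i ≠ j there exist b ≥ 0 and a Laurent monomial L with coefficient in A coprime to Pᵢ such that L · P_{ji}^b · Pᵢ = Pᵢ|_{xⱼ ← P_{ji}/xⱼ}. Define Fᵢ replacing xᵢ by Pᵢ/xᵢ. Then every finite composition F_{i₁} ∘ ⋯ ∘ F_{i_m} is given coordinatewise by Laurent polynomials in x₁,…,xₙ with coefficients in A. -/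
open MvPolynomial
set_option linter.unusedSectionVars false
section
variable {R F : Type*} [CommRing R] [IsDomain R] [Field F]

/-- Fractions with numerator and denominator in `K`, denominator also in `M`. -/
def hepLoc (ι : R →+* F) (K : Subring R) (M : Submonoid R) : Subring F where
  carrier := {y | ∃ m ∈ M, m ∈ K ∧ ∃ q ∈ K, y * ι m = ι q}
  one_mem' := ⟨1, M.one_mem, K.one_mem, 1, K.one_mem, by simp⟩
  zero_mem' := ⟨1, M.one_mem, K.one_mem, 0, K.zero_mem, by simp⟩
  neg_mem' := by
    rintro y ⟨m, hm, hmK, q, hq, h⟩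
    exact ⟨m, hm, hmK, -q, K.neg_mem hq, by rw [map_neg, ← h]; ring⟩
  mul_mem' := by
    rintro y y' ⟨m, hm, hmK, q, hq, h⟩ ⟨m', hm', hmK', q', hq', h'⟩
    exact ⟨m * m', M.mul_mem hm hm', K.mul_mem hmK hmK', q * q', K.mul_mem hq hq', by
      rw [map_mul, map_mul, ← h, ← h']; ring⟩
  add_mem' := by
    rintro y y' ⟨m, hm, hmK, q, hq, h⟩ ⟨m', hm', hmK', q', hq', h'⟩
    exact ⟨m * m', M.mul_mem hm hm', K.mul_mem hmK hmK', q * m' + q' * m,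
      K.add_mem (K.mul_mem hq hmK') (K.mul_mem hq' hmK), by
      rw [map_mul, map_add, map_mul, map_mul, ← h, ← h']; ring⟩

lemma hepLoc_of (ι : R →+* F) (K : Subring R) (M : Submonoid R) {q : R} (hq : q ∈ K) :
    ι q ∈ hepLoc ι K M := ⟨1, M.one_mem, K.one_mem, q, hq, by simp⟩

lemma hepLoc_div (ι : R →+* F) (hι : Function.Injective ι) (K : Subring R) (M : Submonoid R)
    {q m : R} (hq : q ∈ K) (hm : m ∈ K) (hmM : m ∈ M) (h0 : m ≠ 0) :
    ι q / ι m ∈ hepLoc ι K M :=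
  ⟨m, hmM, hm, q, hq, div_mul_cancel₀ _ ((map_ne_zero_iff ι hι).2 h0)⟩

lemma hepLoc_inv (ι : R →+* F) (hι : Function.Injective ι) (K : Subring R) (M : Submonoid R)
    {m : R} (hm : m ∈ K) (hmM : m ∈ M) (h0 : m ≠ 0) :
    (ι m)⁻¹ ∈ hepLoc ι K M := by
  have := hepLoc_div ι hι K M K.one_mem hm hmM h0
  simpa using this

/-- Elements not divisible by the prime `p`. -/
def hepNot (p : R) (hp : Prime p) : Submonoid R where
  carrier := {m | ¬ p ∣ m}
  one_mem' := fun h => hp.not_isUnit (isUnit_of_dvd_one h)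
  mul_mem' := fun ha hb h => (hp.dvd_or_dvd h).elim ha hb

/-- The units of the localization at the prime `p`. -/
def hepU (ι : R →+* F) (p : R) (hp : Prime p) : Submonoid F where
  carrier := {y | ∃ m ∈ hepNot p hp, ∃ q ∈ hepNot p hp, y * ι m = ι q}
  one_mem' := ⟨1, one_mem _, 1, one_mem _, by simp⟩
  mul_mem' := by
    rintro y y' ⟨m, hm, q, hq, h⟩ ⟨m', hm', q', hq', h'⟩
    exact ⟨m * m', mul_mem hm hm', q * q', mul_mem hq hq', by
      rw [map_mul, map_mul, ← h, ← h']; ring⟩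

lemma hepNot_ne {p : R} {hp : Prime p} {m : R} (h : m ∈ hepNot p hp) : m ≠ 0 := by
  rintro rfl
  exact h (dvd_zero _)

lemma hepU_of (ι : R →+* F) (p : R) (hp : Prime p) {q : R} (hq : ¬ p ∣ q) :
    ι q ∈ hepU ι p hp := ⟨1, one_mem _, q, hq, by simp⟩

lemma hepU_ne (ι : R →+* F) (hι : Function.Injective ι) (p : R) (hp : Prime p) {y : F}
    (hy : y ∈ hepU ι p hp) : y ≠ 0 := by
  rintro rfl
  obtain ⟨m, hm, q, hq, h⟩ := hy
  rw [zero_mul] at h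
  exact hepNot_ne hq ((map_eq_zero_iff ι hι).1 h.symm)

lemma hepU_inv (ι : R →+* F) (hι : Function.Injective ι) (p : R) (hp : Prime p) {y : F}
    (hy : y ∈ hepU ι p hp) : y⁻¹ ∈ hepU ι p hp := by
  have h0 := hepU_ne ι hι p hp hy
  obtain ⟨m, hm, q, hq, h⟩ := hy
  exact ⟨q, hq, m, hm, by rw [← h]; field_simp⟩

lemma hepU_zpow (ι : R →+* F) (hι : Function.Injective ι) (p : R) (hp : Prime p) {y : F}
    (hy : y ∈ hepU ι p hp) (e : ℤ) : y ^ e ∈ hepU ι p hp := by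
  cases e with
  | ofNat k => simpa using pow_mem hy k
  | negSucc k => rw [zpow_negSucc]; exact hepU_inv ι hι p hp (pow_mem hy _)

lemma hepU_mem (ι : R →+* F) (p : R) (hp : Prime p) {y : F}
    (hy : y ∈ hepU ι p hp) : y ∈ hepLoc ι ⊤ (hepNot p hp) := by
  obtain ⟨m, hm, q, hq, h⟩ := hy
  exact ⟨m, hm, trivial, q, trivial, h⟩

lemma hepU_add (ι : R →+* F) (p : R) (hp : Prime p) {y t : F}
    (hy : y ∈ hepU ι p hp) (ht : t ∈ hepLoc ι ⊤ (hepNot p hp)) : y + ι p * t ∈ hepU ι p hp := by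
  obtain ⟨m, hm, q, hq, h⟩ := hy
  obtain ⟨m', hm', -, q', -, h'⟩ := ht
  refine ⟨m * m', mul_mem hm hm', q * m' + p * (q' * m), ?_, ?_⟩
  · intro hd
    have := (dvd_add_left (Dvd.intro _ rfl : p ∣ p * (q' * m))).1 hd
    exact mul_mem hq hm' this
  · simp only [map_mul, map_add, ← h, ← h']; ring

lemma hepLoc_mono (ι : R →+* F) {K K' : Subring R} {M M' : Submonoid R} (hK : K ≤ K')
    (hM : M ≤ M') : hepLoc ι K M ≤ hepLoc ι K' M' := by
  rintro y ⟨m, hm, hmK, q, hq, h⟩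
  exact ⟨m, hM hm, hK hmK, q, hK hq, h⟩

/-- Elements of `D` plus multiples of `p` in the local ring. -/
def hepS (ι : R →+* F) (p : R) (hp : Prime p) (K : Subring R) : Subring F where
  carrier := {s | ∃ d ∈ hepLoc ι K (hepNot p hp), ∃ t ∈ hepLoc ι ⊤ (hepNot p hp), s = d + ι p * t}
  one_mem' := ⟨1, one_mem _, 0, zero_mem _, by simp⟩
  zero_mem' := ⟨0, zero_mem _, 0, zero_mem _, by simp⟩
  neg_mem' := by
    rintro y ⟨d, hd, t, ht, rfl⟩
    exact ⟨-d, neg_mem hd, -t, neg_mem ht, by ring⟩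
  add_mem' := by
    rintro y y' ⟨d, hd, t, ht, rfl⟩ ⟨d', hd', t', ht', rfl⟩
    exact ⟨d + d', add_mem hd hd', t + t', add_mem ht ht', by ring⟩
  mul_mem' := by
    rintro y y' ⟨d, hd, t, ht, rfl⟩ ⟨d', hd', t', ht', rfl⟩
    have h1 := hepLoc_mono ι (le_top : K ≤ ⊤) (le_refl (hepNot p hp)) hd
    have h2 := hepLoc_mono ι (le_top : K ≤ ⊤) (le_refl (hepNot p hp)) hd'
    have h3 := hepLoc_of ι ⊤ (hepNot p hp) (q := p) trivial
    exact ⟨d * d', mul_mem hd hd', t * d' + d * t' + ι p * t * t',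
      add_mem (add_mem (mul_mem ht h2) (mul_mem h1 ht')) (mul_mem (mul_mem h3 ht) ht'), by ring⟩

/-- Descent: a fraction that is integral at all primes dividing `P`. -/
lemma hep_descent [UniqueFactorizationMonoid R] (ι : R →+* F) (hι : Function.Injective ι)
    (M : Submonoid R) (P : R) (hP : P ≠ 0)
    (y : F) (hy : ∀ p (hp : Prime p), p ∣ P → y ∈ hepLoc ι ⊤ (hepNot p hp))
    (hy2 : y ∈ hepLoc ι ⊤ (M ⊔ Submonoid.powers P)) : y ∈ hepLoc ι ⊤ M := by
  have key : ∀ a : R, a ∣ P → ∀ y : F, (∀ p (hp : Prime p), p ∣ P → y ∈ hepLoc ι ⊤ (hepNot p hp)) →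
      y * ι a ∈ hepLoc ι ⊤ M → y ∈ hepLoc ι ⊤ M := by
    intro a
    induction a using UniqueFactorizationMonoid.induction_on_prime with
    | h₁ => intro h; exact absurd (zero_dvd_iff.1 h) hP
    | h₂ a ha =>
      rintro - y - h
      obtain ⟨b, hb⟩ := ha.exists_right_inv
      have := mul_mem h (hepLoc_of ι ⊤ M (q := b) trivial)
      rwa [mul_assoc, ← map_mul, hb, map_one, mul_one] at this
    | h₃ a p ha hp ih =>
      intro hd y hy h
      have hpP : p ∣ P := (Dvd.intro _ rfl).trans hd
      refine ih ((Dvd.intro_left _ rfl).trans hd) y hy ?_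
      have h1 : y * ι a ∈ hepLoc ι ⊤ (hepNot p hp) := mul_mem (hy p hp hpP) (hepLoc_of _ _ _ trivial)
      obtain ⟨m, hm, -, r, -, hr⟩ := h1
      obtain ⟨T, hT, -, q, -, hq⟩ := h
      have h2 : q * m = r * p * T := by
        apply hι
        simp only [map_mul, ← hq, ← hr]; ring
      have h3 : p ∣ q * m := by rw [h2]; exact ⟨r * T, by ring⟩
      obtain ⟨q', rfl⟩ := (hp.dvd_or_dvd h3).resolve_right hm
      refine ⟨T, hT, trivial, q', trivial, ?_⟩
      have hp0 : ι p ≠ 0 := (map_ne_zero_iff ι hι).2 hp.ne_zero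
      apply mul_left_cancel₀ hp0
      simp only [map_mul] at hq
      rw [← hq]; ring
  obtain ⟨m, hm, -, q, -, hq⟩ := hy2
  obtain ⟨T, hT, b, ⟨a, rfl⟩, rfl⟩ := Submonoid.mem_sup.1 hm
  have hmem : y * ι P ^ a ∈ hepLoc ι ⊤ M := ⟨T, hT, trivial, q, trivial, by
    rw [← hq]; simp only [map_mul, map_pow]; ring⟩
  clear hq hm
  induction a with
  | zero => simpa using hmem
  | succ a ih =>
    apply ih
    apply key P dvd_rfl
    · intro p hp hpP
      exact mul_mem (hy p hp hpP) (pow_mem (hepLoc_of ι ⊤ _ trivial) _)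
    · rwa [mul_assoc, ← pow_succ]
end

section
variable {A F : Type*} [CommRing A] [Field F] {n : ℕ}

lemma hep_eval_mem (φ : A →+* F) (S : Subring F) (hφ : ∀ a, φ a ∈ S) (v : Fin n → F)
    (p : MvPolynomial (Fin n) A) (hv : ∀ k, v k ∈ S) : eval₂ φ v p ∈ S := by
  induction p using MvPolynomial.induction_on with
  | C a => simpa using hφ a
  | add p q hp hq => rw [eval₂_add]; exact add_mem hp hq
  | mul_X p k hp => rw [eval₂_mul, eval₂_X]; exact mul_mem hp (hv k)

lemma hep_eval_diff (φ : A →+* F) (S : Subring F) (hφ : ∀ a, φ a ∈ S) (v v' : Fin n → F) (j : Fin n)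
    (p : MvPolynomial (Fin n) A) (hv : ∀ k, v k ∈ S) (hv' : ∀ k, v' k ∈ S)
    (h : ∀ k, k ≠ j → v k = v' k) :
    ∃ s ∈ S, eval₂ φ v p = eval₂ φ v' p + (v j - v' j) * s := by
  induction p using MvPolynomial.induction_on with
  | C a => exact ⟨0, zero_mem _, by simp⟩
  | add p q hp hq =>
    obtain ⟨s, hs, e⟩ := hp
    obtain ⟨t, ht, e'⟩ := hq
    exact ⟨s + t, add_mem hs ht, by rw [eval₂_add, eval₂_add, e, e']; ring⟩
  | mul_X p k hp =>
    obtain ⟨s, hs, e⟩ := hp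
    have hm := hep_eval_mem φ S hφ v' p hv'
    by_cases hk : k = j
    · subst hk
      exact ⟨s * v k + eval₂ φ v' p, add_mem (mul_mem hs (hv k)) hm, by
        rw [eval₂_mul, eval₂_mul, eval₂_X, eval₂_X, e]; ring⟩
    · exact ⟨s * v k, mul_mem hs (hv k), by
        rw [eval₂_mul, eval₂_mul, eval₂_X, eval₂_X, e, h k hk]; ring⟩

lemma hep_eval_indep (φ : A →+* F) (v v' : Fin n → F) (i : Fin n)
    (p : MvPolynomial (Fin n) A) (hp : i ∉ p.vars)
    (h : ∀ k, k ≠ i → v k = v' k) : eval₂ φ v p = eval₂ φ v' p := by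
  apply eval₂Hom_congr' (f₁ := φ) (f₂ := φ) rfl _ rfl
  intro k hk _
  apply h
  rintro rfl
  exact hp hk

end

section
variable {A F : Type*} [CommRing A] [IsDomain A] [Field F] {n : ℕ}

/-- Polynomials not involving `X i`. -/
noncomputable def hepK (A : Type*) [CommRing A] {n : ℕ} (i : Fin n) : Subring (MvPolynomial (Fin n) A) :=
  (supported A ({i}ᶜ : Set (Fin n))).toSubring

lemma mem_hepK {i : Fin n} {p : MvPolynomial (Fin n) A} : p ∈ hepK A i ↔ i ∉ p.vars := by
  unfold hepK
  rw [Subalgebra.mem_toSubring, mem_supported]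
  simp

lemma hepK_of_dvd {i : Fin n} {p q : MvPolynomial (Fin n) A} (hq : q ≠ 0) (h : p ∣ q)
    (hi : i ∉ q.vars) : i ∉ p.vars := by
  obtain ⟨r, rfl⟩ := h
  rw [mem_vars_iff_degreeOf_ne_zero, not_not] at hi ⊢
  rw [degreeOf_mul_eq (left_ne_zero_of_mul hq) (right_ne_zero_of_mul hq)] at hi
  omega

lemma hepK_X {i k : Fin n} (h : k ≠ i) : (X k : MvPolynomial (Fin n) A) ∈ hepK A i := by
  rw [mem_hepK, vars_X]; simpa using h.symm

lemma hepK_C (i : Fin n) (a : A) : (C a : MvPolynomial (Fin n) A) ∈ hepK A i := by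
  rw [mem_hepK, vars_C]; simp

lemma hepK_aeval (i : Fin n) (p : MvPolynomial (Fin n) A) :
    aeval (fun k => if k = i then 0 else (X k : MvPolynomial (Fin n) A)) p ∈ hepK A i := by
  induction p using MvPolynomial.induction_on with
  | C a => rw [aeval_C]; exact hepK_C i a
  | add p q hp hq => rw [map_add]; exact add_mem hp hq
  | mul_X p k hp =>
    rw [map_mul, aeval_X]
    refine mul_mem hp ?_
    split_ifs with h
    · exact zero_mem _
    · exact hepK_X h

lemma hep_X_not_dvd {i : Fin n} {q : MvPolynomial (Fin n) A} (h0 : q ≠ 0) (h : q ∈ hepK A i) :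
    ¬ X i ∣ q := by
  intro hd
  exact hepK_of_dvd h0 hd (mem_hepK.1 h) (by simp [vars_X])

lemma hep_deriv {i : Fin n} {p B E : MvPolynomial (Fin n) A} (hp : p ∈ hepK A i)
    (hB : B ∈ hepK A i) (hE : E ∈ hepK A i) (h : p ∣ B * X i + E) : p ∣ B := by
  obtain ⟨q, hq⟩ := h
  have := congrArg (pderiv i) hq
  rw [map_add, Derivation.leibniz, Derivation.leibniz,
    pderiv_eq_zero_of_notMem_vars (mem_hepK.1 hp), pderiv_eq_zero_of_notMem_vars (mem_hepK.1 hB),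
    pderiv_eq_zero_of_notMem_vars (mem_hepK.1 hE), pderiv_X_self] at this
  simp at this
  exact ⟨_, this⟩

lemma hep_zpow_zero (ι : MvPolynomial (Fin n) A →+* F) (hι : Function.Injective ι) {i : Fin n}
    {p : MvPolynomial (Fin n) A} (hp : Prime p) {c d : F}
    (hc : c ∈ hepLoc ι (hepK A i) (hepNot p hp)) (hd : d ∈ hepLoc ι (hepK A i) (hepNot p hp))
    (hc0 : c ≠ 0) (e : ℤ) (h : ι (X i) ^ e * c = d) : e = 0 := by
  have hX : ι (X i) ≠ 0 := (map_ne_zero_iff ι hι).2 (X_ne_zero i)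
  have hd0 : d ≠ 0 := by rw [← h]; exact mul_ne_zero (zpow_ne_zero _ hX) hc0
  obtain ⟨m, hm, hmK, q, hq, e1⟩ := hc
  obtain ⟨m', hm', hmK', q', hq', e2⟩ := hd
  have hm0 := hepNot_ne hm
  have hm0' := hepNot_ne hm'
  have hq0 : q ≠ 0 := by
    rintro rfl
    rw [map_zero, mul_eq_zero, map_eq_zero_iff ι hι] at e1
    tauto
  have hq0' : q' ≠ 0 := by
    rintro rfl
    rw [map_zero, mul_eq_zero, map_eq_zero_iff ι hι] at e2
    tauto
  have key : ι (X i) ^ e * ι (q * m') = ι (q' * m) := by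
    simp only [map_mul, ← e1, ← e2, ← h]; ring
  have k1 := hep_X_not_dvd (mul_ne_zero hq0 hm0') (mul_mem hq hmK')
  have k2 := hep_X_not_dvd (mul_ne_zero hq0' hm0) (mul_mem hq' hmK)
  by_contra he
  rcases lt_or_gt_of_ne he with he | he
  · obtain ⟨a, rfl⟩ : ∃ a : ℕ, e = -((a : ℤ) + 1) := ⟨(-e - 1).toNat, by omega⟩
    apply k1
    have : q * m' = X i ^ (a + 1) * (q' * m) := by
      apply hι
      rw [map_mul ι (X i ^ (a+1)), ← key, map_pow, zpow_neg, ← mul_assoc]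
      rw [show ((a : ℤ) + 1) = ((a + 1 : ℕ) : ℤ) by push_cast; rfl, zpow_natCast,
        mul_inv_cancel₀ (pow_ne_zero _ hX), one_mul]
    rw [this, pow_succ]
    exact ⟨X i ^ a * (q' * m), by ring⟩
  · obtain ⟨a, rfl⟩ : ∃ a : ℕ, e = ((a + 1 : ℕ) : ℤ) := ⟨(e - 1).toNat, by omega⟩
    apply k2
    have : q' * m = X i ^ (a + 1) * (q * m') := by
      apply hι
      rw [map_mul ι (X i ^ (a+1)), ← key, map_pow, zpow_natCast]
    rw [this, pow_succ]
    exact ⟨X i ^ a * (q * m'), by ring⟩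

/-- The two new cluster variables are units at every prime dividing `P i`. -/
lemma hep_units (ι : MvPolynomial (Fin n) A →+* F) (hι : Function.Injective ι)
    (φ : A →+* F) (hφ : ∀ a, φ a = ι (C a)) (x : Fin n → F) (hx : ∀ i, x i = ι (X i))
    (Pi Pj Pji : MvPolynomial (Fin n) A) (i j : Fin n) (hij : i ≠ j)
    (hPi : Pi ≠ 0) (hdep : i ∉ Pi.vars) 
    (hPji : Pji = aeval (fun k => if k = i then 0 else X k) Pj)
    (b : ℕ) (cL : A) (eL : Fin n → ℤ)
    (hkey : (φ cL * ∏ k, x k ^ eL k) * ι Pji ^ b * ι Pi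
        = eval₂ φ (Function.update x j (ι Pji / x j)) Pi)
    (p : MvPolynomial (Fin n) A) (hp : Prime p) (hpP : p ∣ Pi) (hpX : ∀ k, ¬ p ∣ X k)
    (hpc : ¬ p ∣ C cL) (hpji : ¬ p ∣ Pji) (z u w : F) (hz : z = ι Pi / x i)
    (hu : u = eval₂ φ (Function.update x i z) Pj / x j)
    (hw : w = eval₂ φ (Function.update (Function.update x i z) j u) Pi / z) :
    u ∈ hepU ι p hp ∧ w ∈ hepU ι p hp := by
  have hpK : p ∈ hepK A i := mem_hepK.2 (hepK_of_dvd hPi hpP hdep)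
  have hX0 : ∀ k, x k ≠ 0 := fun k => by
    rw [hx]; exact (map_ne_zero_iff ι hι).2 (X_ne_zero k)
  have hz0 : z ≠ 0 := by
    rw [hz]; exact div_ne_zero ((map_ne_zero_iff ι hι).2 hPi) (hX0 i)
  have hxU : ∀ k, x k ∈ hepU ι p hp := fun k => by rw [hx]; exact hepU_of ι p hp (hpX k)
  -- the pieces
  have hDφ : ∀ a, φ a ∈ hepLoc ι (hepK A i) (hepNot p hp) := fun a => by
    rw [hφ]; exact hepLoc_of _ _ _ (hepK_C i a)
  have hDx : ∀ k, k ≠ i → x k ∈ hepLoc ι (hepK A i) (hepNot p hp) := fun k hk => by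
    rw [hx]; exact hepLoc_of _ _ _ (hepK_X hk)
  have hDxi : ∀ k, k ≠ i → (x k)⁻¹ ∈ hepLoc ι (hepK A i) (hepNot p hp) := fun k hk => by
    rw [hx]; exact hepLoc_inv ι hι _ _ (hepK_X hk) (hpX k) (X_ne_zero k)
  have hPjiK : Pji ∈ hepK A i := by
    rw [hPji]
    exact hepK_aeval i Pj
  have hDji : ι Pji ∈ hepLoc ι (hepK A i) (hepNot p hp) := hepLoc_of _ _ _ hPjiK
  have hDS : ∀ d ∈ hepLoc ι (hepK A i) (hepNot p hp), d ∈ hepS ι p hp (hepK A i) :=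
    fun d hd => ⟨d, hd, 0, zero_mem _, by simp⟩
  have hSW : ∀ d ∈ hepS ι p hp (hepK A i), d ∈ hepLoc ι ⊤ (hepNot p hp) := by
    rintro _ ⟨d, hd, t, ht, rfl⟩
    exact add_mem (hepLoc_mono ι le_top le_rfl hd) (mul_mem (hepLoc_of ι ⊤ _ trivial) ht)
  obtain ⟨z', hz'W, hz'⟩ : ∃ z' ∈ hepLoc ι ⊤ (hepNot p hp), z = ι p * z' := by
    obtain ⟨r, rfl⟩ := hpP
    refine ⟨ι r / x i, ?_, ?_⟩
    · rw [hx]; exact hepLoc_div ι hι _ _ trivial trivial (hpX i) (X_ne_zero i)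
    · rw [hz, map_mul]; ring
  have hzS : z ∈ hepS ι p hp (hepK A i) := ⟨0, zero_mem _, z', hz'W, by rw [hz']; simp⟩
  have hx1S : ∀ k, Function.update x i z k ∈ hepS ι p hp (hepK A i) := by
    intro k
    by_cases hk : k = i
    · subst hk; simpa using hzS
    · rw [Function.update_of_ne hk]; exact hDS _ (hDx k hk)
  have hSφ : ∀ a, φ a ∈ hepS ι p hp (hepK A i) := fun a => hDS _ (hDφ a)
  -- u
  have hP0 : eval₂ φ (Function.update x i 0) Pj = ι Pji := by
    rw [hPji, aeval_def, eval₂_comp_left ι]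
    have : φ = ι.comp (algebraMap A (MvPolynomial (Fin n) A)) := by
      ext a; rw [hφ]; rfl
    rw [← this]
    congr 1
    funext k
    by_cases hk : k = i
    · subst hk; simp
    · simp [hk, hx]
  obtain ⟨s, hs, hs1⟩ := hep_eval_diff φ (hepS ι p hp (hepK A i)) hSφ (Function.update x i z)
    (Function.update x i 0) i Pj hx1S (by
      intro k
      by_cases hk : k = i
      · subst hk; simp
      · rw [Function.update_of_ne hk]; exact hDS _ (hDx k hk)) (by
      intro k hk
      rw [Function.update_of_ne hk, Function.update_of_ne hk])
  rw [hP0, Function.update_self, Function.update_self, sub_zero] at hs1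
  set u0 := ι Pji / x j with hu0
  have hu1 : u = u0 + z * (s * (x j)⁻¹) := by
    rw [hu, hs1, hu0]; ring
  have hsx : s * (x j)⁻¹ ∈ hepS ι p hp (hepK A i) := mul_mem hs (hDS _ (hDxi j hij.symm))
  have hu0D : u0 ∈ hepLoc ι (hepK A i) (hepNot p hp) := by
    rw [hu0, div_eq_mul_inv]; exact mul_mem hDji (hDxi j hij.symm)
  have hu0U : u0 ∈ hepU ι p hp := by
    rw [hu0, div_eq_mul_inv]
    exact mul_mem (hepU_of ι p hp hpji) (hepU_inv ι hι p hp (hxU j))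
  have huS : u ∈ hepS ι p hp (hepK A i) := by
    rw [hu1]; exact add_mem (hDS _ hu0D) (mul_mem hzS hsx)
  refine ⟨?_, ?_⟩
  · rw [hu1, hz', mul_assoc]
    exact hepU_add ι p hp hu0U (mul_mem hz'W (hSW _ hsx))
  -- w
  obtain ⟨t, ht, ht1⟩ := hep_eval_diff φ (hepS ι p hp (hepK A i)) hSφ
    (Function.update (Function.update x i z) j u)
    (Function.update (Function.update x i z) j u0) j Pi (by
      intro k
      by_cases hk : k = j
      · subst hk; simpa using huS
      · rw [Function.update_of_ne hk]; exact hx1S k) (by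
      intro k
      by_cases hk : k = j
      · subst hk; simpa using hDS _ hu0D
      · rw [Function.update_of_ne hk]; exact hx1S k) (by
      intro k hk
      rw [Function.update_of_ne hk, Function.update_of_ne hk])
  rw [Function.update_self, Function.update_self] at ht1
  have hind : eval₂ φ (Function.update (Function.update x i z) j u0) Pi =
      eval₂ φ (Function.update x j u0) Pi := by
    apply hep_eval_indep φ _ _ i _ hdep
    intro k hk
    by_cases hkj : k = j
    · subst hkj; simp
    · simp [hk, hkj]
  have hind2 : eval₂ φ (Function.update (Function.update x i 0) j u0) Pi =
      eval₂ φ (Function.update x j u0) Pi := by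
    apply hep_eval_indep φ _ _ i _ hdep
    intro k hk
    by_cases hkj : k = j
    · subst hkj; simp
    · simp [hk, hkj]
  have hδ : eval₂ φ (Function.update x j u0) Pi ∈ hepLoc ι (hepK A i) (hepNot p hp) := by
    rw [← hind2]
    apply hep_eval_mem _ _ hDφ
    intro k
    by_cases hkj : k = j
    · subst hkj; simpa using hu0D
    · rw [Function.update_of_ne hkj]
      by_cases hk : k = i
      · subst hk; simp
      · rw [Function.update_of_ne hk]; exact hDx k hk
  have hDzpow : ∀ k, k ≠ i → x k ^ eL k ∈ hepLoc ι (hepK A i) (hepNot p hp) := by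
    intro k hk
    cases eL k with
    | ofNat a => simpa using pow_mem (hDx k hk) a
    | negSucc a => rw [zpow_negSucc, ← inv_pow]; exact pow_mem (hDxi k hk) _
  have hprod : ∏ k ∈ Finset.univ.erase i, x k ^ eL k ∈ hepLoc ι (hepK A i) (hepNot p hp) :=
    prod_mem fun k hk => hDzpow k (Finset.ne_of_mem_erase hk)
  have hsplit : ∏ k, x k ^ eL k = x i ^ eL i * ∏ k ∈ Finset.univ.erase i, x k ^ eL k :=
    (Finset.mul_prod_erase _ _ (Finset.mem_univ i)).symm
  have hβU : (φ cL * ∏ k, x k ^ eL k) * ι Pji ^ b ∈ hepU ι p hp := by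
    refine mul_mem (mul_mem ?_ (prod_mem fun k _ => hepU_zpow ι hι p hp (hxU k) _))
      (pow_mem (hepU_of ι p hp hpji) _)
    rw [hφ]; exact hepU_of ι p hp hpc
  have hβ0 := hepU_ne ι hι p hp hβU
  have hei : eL i = 0 := by
    refine hep_zpow_zero ι hι hp
      (c := φ cL * (∏ k ∈ Finset.univ.erase i, x k ^ eL k) * ι Pji ^ b * ι Pi) ?_ hδ ?_ _ ?_
    · exact mul_mem (mul_mem (mul_mem (hDφ _) hprod) (pow_mem hDji _))
        (hepLoc_of _ _ _ (mem_hepK.2 hdep))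
    · intro h0
      have : (φ cL * ∏ k, x k ^ eL k) * ι Pji ^ b * ι Pi = 0 := by
        rw [hsplit]; linear_combination x i ^ eL i * h0
      exact mul_ne_zero hβ0 ((map_ne_zero_iff ι hι).2 hPi) this
    · rw [← hkey, hsplit, hx i]; ring
  have hβD : (φ cL * ∏ k, x k ^ eL k) * ι Pji ^ b ∈ hepLoc ι (hepK A i) (hepNot p hp) := by
    rw [hsplit, hei, zpow_zero, one_mul]
    exact mul_mem (mul_mem (hDφ _) hprod) (pow_mem hDji _)
  generalize (φ cL * ∏ k, x k ^ eL k) * ι Pji ^ b = β at *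
  have hPz : ι Pi = z * x i := by rw [hz, div_mul_cancel₀ _ (hX0 i)]
  have hw1 : w = β * x i + (s * (x j)⁻¹) * t := by
    rw [hw, ht1, hind, ← hkey, hPz, hu1]
    field_simp
    ring
  obtain ⟨d, hd, t', ht', hdt⟩ := mul_mem hsx ht
  rw [hw1, hdt, ← add_assoc]
  refine hepU_add ι p hp ?_ ht'
  obtain ⟨m, hm, hmK, B, hB, e1⟩ := hβD
  obtain ⟨m', hm', hmK', E, hE, e2⟩ := hd
  refine ⟨m * m', mul_mem hm hm', (B * m') * X i + E * m, ?_, ?_⟩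
  · intro hdv
    have h1 := hep_deriv hpK (mul_mem hB hmK') (mul_mem hE hmK) hdv
    have h2 : p ∣ B := (hp.dvd_or_dvd h1).resolve_right hm'
    obtain ⟨m0, hm0, q0, hq0, e0⟩ := hβU
    have h3 : B * m0 = q0 * m := by
      apply hι
      simp only [map_mul, ← e0, ← e1]; ring
    have h4 : p ∣ q0 * m := h3 ▸ h2.mul_right m0
    exact mul_mem hq0 hm h4
  · simp only [map_mul, map_add, ← e1, ← e2, hx]; ring
end

section
variable {A F : Type*} [CommRing A] [IsDomain A] [Field F] {n : ℕ}

lemma hep_inj (ι : MvPolynomial (Fin n) A →+* F) (hι : Function.Injective ι)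
    (φ : A →+* F) (hφ : ∀ a, φ a = ι (C a)) (x : Fin n → F) (hx : ∀ i, x i = ι (X i))
    (hev : ∀ p, eval₂ φ x p = ι p)
    (Q : MvPolynomial (Fin n) A) (i : Fin n) (hQ : Q ≠ 0) (hdep : i ∉ Q.vars) :
    Function.Injective (eval₂Hom φ (Function.update x i (ι Q / x i))) := by
  have hX0 : ∀ k, x k ≠ 0 := fun k => by
    rw [hx]; exact (map_ne_zero_iff ι hι).2 (X_ne_zero k)
  have hQ0 : ι Q ≠ 0 := (map_ne_zero_iff ι hι).2 hQ
  have hgQ : eval₂Hom φ (Function.update x i (ι Q / x i)) Q = ι Q := by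
    rw [← hev]
    apply hep_eval_indep φ _ _ i _ hdep
    intro k hk
    simp [hk]
  have hgC : ∀ a, eval₂Hom φ (Function.update x i (ι Q / x i)) (C a) = ι (C a) := by
    intro a; simp [hφ]
  have hgi : eval₂Hom φ (Function.update x i (ι Q / x i)) (X i) = ι Q / x i := by simp
  have hgk : ∀ k, k ≠ i → eval₂Hom φ (Function.update x i (ι Q / x i)) (X k) = ι (X k) := by
    intro k hk; simp [hk, hx]
  generalize eval₂Hom φ (Function.update x i (ι Q / x i)) = g at *
  have key : ∀ p, ∃ (N : ℕ) (q : MvPolynomial (Fin n) A),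
      ι q = x i ^ N * g p ∧ g q = (ι Q / x i) ^ N * ι p := by
    intro p
    induction p using MvPolynomial.induction_on with
    | C a => exact ⟨0, C a, by simp [hgC], by simp [hgC]⟩
    | add p p' hp hp' =>
      obtain ⟨N, q, h1, h2⟩ := hp
      obtain ⟨N', q', h1', h2'⟩ := hp'
      refine ⟨N + N', X i ^ N' * q + X i ^ N * q', ?_, ?_⟩
      · simp only [map_add, map_mul, map_pow, h1, h1', ← hx]; ring
      · simp only [map_add, map_mul, map_pow, h2, h2', hgi]; ring
    | mul_X p k hp =>
      obtain ⟨N, q, h1, h2⟩ := hp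
      by_cases hk : k = i
      · subst hk
        refine ⟨N + 1, q * Q, ?_, ?_⟩
        · rw [map_mul, map_mul, h1, hgi]
          have := hX0 k
          field_simp
          ring
        · rw [map_mul, map_mul, h2, hgQ, ← hx]
          have := hX0 k
          rw [pow_succ]
          field_simp
      · refine ⟨N, q * X k, ?_, ?_⟩
        · rw [map_mul, map_mul, h1, hgk k hk]; ring
        · rw [map_mul, map_mul, h2, hgk k hk]; ring
  rw [injective_iff_map_eq_zero]
  intro p hp
  obtain ⟨N, q, h1, h2⟩ := key p
  rw [hp, mul_zero, map_eq_zero_iff ι hι] at h1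
  rw [h1, map_zero] at h2
  have := (mul_eq_zero.1 h2.symm).resolve_left (pow_ne_zero _ (div_ne_zero hQ0 (hX0 i)))
  exact (map_eq_zero_iff ι hι).1 this

lemma hep_foldr (φ : A →+* F) (P : Fin n → MvPolynomial (Fin n) A)
    (step : Fin n → (Fin n → F) → (Fin n → F))
    (hstep : ∀ (i : Fin n) (v : Fin n → F),
      step i v = Function.update v i (eval₂ φ v (P i) / v i))
    (σ : F →+* F) (hσ : ∀ a, σ (φ a) = φ a) (v : Fin n → F) (l : List (Fin n)) :
    l.foldr step (σ ∘ v) = σ ∘ l.foldr step v := by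
  induction l with
  | nil => rfl
  | cons i l ih =>
    rw [List.foldr_cons, List.foldr_cons, ih, hstep, hstep]
    generalize l.foldr step v = y
    have h : eval₂ φ (σ ∘ y) (P i) = σ (eval₂ φ y (P i)) := by
      rw [eval₂_comp_left σ]
      congr 1
      ext a; simp [hσ]
    funext k
    by_cases hk : k = i
    · subst hk; simp [h]
    · simp [hk]

lemma hep_map_closure (φ : A →+* F) (x : Fin n → F) (σ : F →+* F) (hσ : ∀ a, σ (φ a) = φ a)
    (S : Subring F) (hφS : ∀ a, φ a ∈ S) (hxS : ∀ k, σ (x k) ∈ S) (hxS' : ∀ k, (σ (x k))⁻¹ ∈ S)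
    (y : F) (hy : y ∈ Subring.closure
        (Set.range φ ∪ Set.range x ∪ Set.range (fun i => (x i)⁻¹))) : σ y ∈ S := by
  have : Subring.closure (Set.range φ ∪ Set.range x ∪ Set.range (fun i => (x i)⁻¹)) ≤
      S.comap σ := by
    rw [Subring.closure_le]
    rintro _ ((⟨a, rfl⟩ | ⟨k, rfl⟩) | ⟨k, rfl⟩)
    · simpa [hσ] using hφS a
    · simpa using hxS k
    · simpa using hxS' k
  exact this hy
end

/-- Corollary 5.1 of Fomin–Zelevinsky "The Laurent phenomenon"
(homogeneous exchange patterns): if the exchange polynomials P₁,…,Pₙ over a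
UFD A satisfy the three compatibility conditions, then every finite
composition of the exchange maps Fᵢ : xᵢ ↦ Pᵢ/xᵢ is given coordinatewise by
Laurent polynomials in x₁,…,xₙ with coefficients in A. -/
theorem homogeneous_exchange_pattern_laurent
    (A : Type*) [CommRing A] [IsDomain A] [UniqueFactorizationMonoid A]
    (n : ℕ)
    (F : Type*) [Field F] [Algebra (MvPolynomial (Fin n) A) F]
    [IsFractionRing (MvPolynomial (Fin n) A) F]
    (φ : A →+* F)
    (hφ : φ = (algebraMap (MvPolynomial (Fin n) A) F).comp
      (C : A →+* MvPolynomial (Fin n) A))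
    (x : Fin n → F) (hx : ∀ i, x i = algebraMap (MvPolynomial (Fin n) A) F (X i))
    (P : Fin n → MvPolynomial (Fin n) A)
    (hPne : ∀ k, P k ≠ 0)
    -- (1) each Pₖ does not depend on xₖ and is not divisible by any xᵢ
    (hdep : ∀ k, k ∉ (P k).vars)
    (hdiv : ∀ k i, ¬ (X i ∣ P k))
    -- P j with xᵢ set to zero
    (Psub : Fin n → Fin n → MvPolynomial (Fin n) A)
    (hPsub : ∀ j i, Psub j i =
      aeval (fun k => if k = i then 0 else X k) (P j))
    -- (2) coprimality of P_{ji} and Pᵢ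
    (hcop : ∀ i j, i ≠ j → ∀ d : MvPolynomial (Fin n) A,
      d ∣ Psub j i → d ∣ P i → IsUnit d)
    -- (3) the key substitution identity, with a Laurent monomial L = cL·∏ xᵏ
    (hkey : ∀ i j, i ≠ j → ∃ (b : ℕ) (cL : A) (eL : Fin n → ℤ),
      (∀ d : MvPolynomial (Fin n) A, d ∣ C cL → d ∣ P i → IsUnit d) ∧
      (φ cL * ∏ k, x k ^ eL k) * (eval₂ φ x (Psub j i)) ^ b * eval₂ φ x (P i)
        = eval₂ φ (Function.update x j (eval₂ φ x (Psub j i) / x j)) (P i))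
    -- the exchange maps
    (step : Fin n → (Fin n → F) → (Fin n → F))
    (hstep : ∀ (i : Fin n) (v : Fin n → F),
      step i v = Function.update v i (eval₂ φ v (P i) / v i)) :
    ∀ (l : List (Fin n)) (j : Fin n),
      (l.foldr step x) j ∈ Subring.closure
        (Set.range φ ∪ Set.range x ∪ Set.range (fun i => (x i)⁻¹)) := by
  set ι := algebraMap (MvPolynomial (Fin n) A) F with hιdef
  have hι : Function.Injective ι := IsFractionRing.injective _ _
  have hφ' : ∀ a, φ a = ι (C a) := fun a => by rw [hφ]; rfl
  have hev : ∀ p, eval₂ φ x p = ι p := by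
    intro p
    conv_rhs => rw [← eval₂_eta p, eval₂_comp_left ι]
    rw [hφ]
    congr 1
    funext k; exact hx k
  have hX0 : ∀ k, x k ≠ 0 := fun k => by
    rw [hx]; exact (map_ne_zero_iff ι hι).2 (X_ne_zero k)
  have hP0 : ∀ k, ι (P k) ≠ 0 := fun k => (map_ne_zero_iff ι hι).2 (hPne k)
  have hs1 : ∀ i, step i x = Function.update x i (ι (P i) / x i) := fun i => by
    rw [hstep, hev]
  -- the field endomorphisms realizing the exchange maps
  have hσ : ∀ i, ∃ σ : F →+* F, (∀ a, σ (φ a) = φ a) ∧ step i x = σ ∘ x := by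
    intro i
    have hinj := hep_inj ι hι φ hφ' x hx hev (P i) i (hPne i) (hdep i)
    refine ⟨IsFractionRing.lift hinj, ?_, ?_⟩
    · intro a
      rw [hφ', IsFractionRing.lift_algebraMap]; simp [hφ']
    · funext k
      rw [hs1, Function.comp_apply, hx k, IsFractionRing.lift_algebraMap]; simp
  choose σ hσφ hσx using hσ
  have hfold := hep_foldr φ P step hstep
  have hstepσ : ∀ (τ : F →+* F), (∀ a, τ (φ a) = φ a) → ∀ i v, step i (τ ∘ v) = τ ∘ step i v :=
    fun τ hτ i v => hfold τ hτ v [i]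
  have hinv : ∀ i, step i (step i x) = x := by
    intro i
    rw [hstep i (step i x), hs1]
    have h : eval₂ φ (Function.update x i (ι (P i) / x i)) (P i) = ι (P i) := by
      rw [← hev]
      apply hep_eval_indep φ _ _ i _ (hdep i)
      intro k hk; simp [hk]
    rw [h, Function.update_self, Function.update_idem]
    have h2 : ι (P i) / (ι (P i) / x i) = x i := by
      have := hX0 i
      have := hP0 i
      field_simp
    rw [h2, Function.update_eq_self]
  set L := Subring.closure
        (Set.range φ ∪ Set.range x ∪ Set.range (fun i => (x i)⁻¹)) with hL
  have hLφ : ∀ a, φ a ∈ L := fun a => Subring.subset_closure (Or.inl (Or.inl ⟨a, rfl⟩))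
  have hLx : ∀ k, x k ∈ L := fun k => Subring.subset_closure (Or.inl (Or.inr ⟨k, rfl⟩))
  have hLxi : ∀ k, (x k)⁻¹ ∈ L := fun k => Subring.subset_closure (Or.inr ⟨k, rfl⟩)
  have hLoc : hepLoc ι ⊤ (Submonoid.closure (Set.range X)) ≤ L := by
    rintro y ⟨m, hm, -, q, -, h⟩
    have hm1 : ι m ≠ 0 ∧ (ι m)⁻¹ ∈ L := by
      clear h
      induction hm using Submonoid.closure_induction with
      | mem m hm =>
        obtain ⟨k, rfl⟩ := hm
        rw [← hx]; exact ⟨hX0 k, hLxi k⟩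
      | one => simp
      | mul a b _ _ ha hb =>
        rw [map_mul, mul_inv]
        exact ⟨mul_ne_zero ha.1 hb.1, mul_mem ha.2 hb.2⟩
    have : y = ι q * (ι m)⁻¹ := by rw [← h, mul_inv_cancel_right₀ hm1.1]
    rw [this, ← hev]
    exact mul_mem (hep_eval_mem φ L hLφ x q hLx) hm1.2
  -- induction on the length
  suffices H : ∀ (m : ℕ) (l : List (Fin n)), l.length = m → ∀ k, l.foldr step x k ∈ L from
    fun l j => H _ l rfl j
  intro m
  induction m using Nat.strong_induction_on with
  | _ m ih =>
  intro l hl k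
  rcases List.eq_nil_or_concat l with rfl | ⟨l1, i, rfl⟩
  · exact hLx k
  rcases List.eq_nil_or_concat l1 with rfl | ⟨l2, j, rfl⟩
  · simp only [List.concat_eq_append, List.nil_append, List.foldr_cons, List.foldr_nil]
    rw [hs1]
    by_cases hk : k = i
    · subst hk
      rw [Function.update_self, div_eq_mul_inv, ← hev]
      exact mul_mem (hep_eval_mem φ L hLφ x _ hLx) (hLxi k)
    · rw [Function.update_of_ne hk]; exact hLx k
  simp only [List.concat_eq_append, List.length_append, List.length_cons, List.length_nil] at hl
  simp only [List.concat_eq_append, List.foldr_append, List.foldr_cons, List.foldr_nil]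
  by_cases hij : i = j
  · subst hij
    rw [hinv]
    exact ih l2.length (by omega) l2 rfl k
  -- the clusters t₁, t₂, t₃
  have hx1 : ∀ k', σ i (x k') = Function.update x i (ι (P i) / x i) k' := fun k' => by
    rw [← hs1, hσx]; rfl
  obtain ⟨τ, hτφ, hτx⟩ : ∃ τ : F →+* F, (∀ a, τ (φ a) = φ a) ∧
      τ ∘ x = step j (step i x) := by
    refine ⟨(σ i).comp (σ j), fun a => by simp [hσφ], ?_⟩
    rw [hσx i, hstepσ _ (hσφ i), hσx j]; rfl
  obtain ⟨ρ, hρφ, hρx⟩ : ∃ ρ : F →+* F, (∀ a, ρ (φ a) = φ a) ∧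
      ρ ∘ x = step i (step j (step i x)) := by
    refine ⟨τ.comp (σ i), fun a => by simp [hσφ, hτφ], ?_⟩
    rw [← hτx, hstepσ _ hτφ, hσx i]; rfl
  have hρ2 : step i (ρ ∘ x) = step j (step i x) := by
    rw [hρx, ← hτx, hstepσ _ hτφ, hstepσ _ hτφ, hinv]
  have y1 : l2.foldr step (step j (step i x)) k = σ i ((l2 ++ [j]).foldr step x k) := by
    have := congrFun (hfold (σ i) (hσφ i) x (l2 ++ [j])) k
    rw [← hσx, List.foldr_append] at this
    exact this
  have y3 : l2.foldr step (step j (step i x)) k = ρ ((l2 ++ [i]).foldr step x k) := by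
    have := congrFun (hfold ρ hρφ x (l2 ++ [i])) k
    rw [List.foldr_append, List.foldr_cons, List.foldr_nil, hρ2] at this
    exact this
  have m1 := ih (l2 ++ [j]).length (by simp; omega) (l2 ++ [j]) rfl k
  have m3 := ih (l2 ++ [i]).length (by simp; omega) (l2 ++ [i]) rfl k
  apply hLoc
  apply hep_descent ι hι _ (P i) (hPne i)
  · intro p hp hpP
    rw [y3]
    have hpX : ∀ k, ¬ p ∣ X k := by
      intro k' hd
      have := (hp.associated_of_dvd (X_prime (i := k')) hd)
      exact hdiv i k' (this.symm.dvd.trans hpP)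
    obtain ⟨b, cL, eL, hc, hk⟩ := hkey i j hij
    rw [hev, hev] at hk
    have hU := hep_units ι hι φ hφ' x hx (P i) (P j) (Psub j i) i j hij (hPne i) (hdep i)
      (hPsub j i) b cL eL hk p hp hpP hpX (fun h => hp.not_isUnit (hc p h hpP))
      (fun h => hp.not_isUnit (hcop i j hij p h hpP)) _ _ _ rfl rfl rfl
    have hxU : ∀ k, x k ∈ hepU ι p hp := fun k => by rw [hx]; exact hepU_of ι p hp (hpX k)
    have hρU : ∀ k, ρ (x k) ∈ hepU ι p hp := by
      intro k'
      have e : ρ (x k') = step i (step j (step i x)) k' := congrFun hρx k'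
      rw [e, hs1, hstep j, hstep i]
      by_cases hki : k' = i
      · subst hki
        have := hU.2
        rw [Function.update_self, Function.update_of_ne hij, Function.update_self,
          Function.update_of_ne (Ne.symm hij)]
        exact this
      · rw [Function.update_of_ne hki]
        by_cases hkj : k' = j
        · subst hkj
          rw [Function.update_self, Function.update_of_ne hki]
          exact hU.1
        · rw [Function.update_of_ne hkj, Function.update_of_ne hki]
          exact hxU k'
    exact hep_map_closure φ x ρ hρφ _ (fun a => by rw [hφ']; exact hepLoc_of ι ⊤ _ trivial)
      (fun k => hepU_mem ι p hp (hρU k)) (fun k => hepU_mem ι p hp (hepU_inv ι hι p hp (hρU k)))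
      _ m3
  · rw [y1]
    have hXM : ∀ k : Fin n, (X k : MvPolynomial (Fin n) A) ∈
        Submonoid.closure (Set.range X) ⊔ Submonoid.powers (P i) := fun k =>
      (le_sup_left : Submonoid.closure (Set.range X) ≤ _) (Submonoid.subset_closure ⟨k, rfl⟩)
    have hPM : P i ∈ Submonoid.closure (Set.range X) ⊔ Submonoid.powers (P i) :=
      (le_sup_right : Submonoid.powers (P i) ≤ _) (Submonoid.mem_powers _)
    refine hep_map_closure φ x (σ i) (hσφ i) _
      (fun a => by rw [hφ']; exact hepLoc_of ι ⊤ _ trivial) ?_ ?_ _ m1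
    · intro k'
      rw [hx1]
      by_cases hk : k' = i
      · subst hk
        rw [Function.update_self, hx]
        exact hepLoc_div ι hι ⊤ _ trivial trivial (hXM _) (X_ne_zero _)
      · rw [Function.update_of_ne hk, hx]; exact hepLoc_of ι ⊤ _ trivial
    · intro k'
      rw [hx1]
      by_cases hk : k' = i
      · subst hk
        rw [Function.update_self, inv_div, hx]
        exact hepLoc_div ι hι ⊤ _ trivial trivial hPM (hPne _)
      · rw [Function.update_of_ne hk, hx]
        exact hepLoc_inv ι hι ⊤ _ trivial (hXM _) (X_ne_zero _)
end

section
/- Let A be a UFD and let P, Q, R ∈ A[x,y,…] be exchange polynomials for three consecutive edges labeled i, j, i of a caterpillar pattern, satisfying: P, Q, R are not divisible by any cluster variable and P, R do not depend on the i-th variable while Q does not depend on the j-th; P and Q₀ := Q|_{xᵢ=0} are coprime; and R|_{xⱼ ← Q₀/xⱼ} = L · Q₀^b · P for some b ≥ 0 and Laurent monomial L whose coefficient is coprime with P. Starting from a cluster (x,y,…) of independent variables, perform exchanges z = P(y)/x, u = Q(z)/y, v = R(u)/z. Then v is a Laurent polynomial over A in the initial cluster, and moreover gcd(z,u) = 1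 and gcd(z,v) = 1 in the Laurent polynomial ring. -/
open MvPolynomial

namespace Caterpillar

set_option linter.unusedSectionVars false

section
variable {A : Type*} [CommRing A] {n : ℕ} {F : Type*} [Field F]
  [Algebra (MvPolynomial (Fin n) A) F]

/-- Laurent ring on the variables in `s` (polynomials on those variables, with inverses). -/
noncomputable def Lr (A : Type*) [CommRing A] {n : ℕ} (F : Type*) [Field F]
    [Algebra (MvPolynomial (Fin n) A) F] (s : Finset (Fin n)) : Subring F :=
  Subring.closure
    (Set.range ((algebraMap (MvPolynomial (Fin n) A) F).comp (C : A →+* MvPolynomial (Fin n) A))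
      ∪ (fun k => algebraMap (MvPolynomial (Fin n) A) F (X k)) '' s
      ∪ (fun k => (algebraMap (MvPolynomial (Fin n) A) F (X k))⁻¹) '' s)

lemma C_mem (s : Finset (Fin n)) (a : A) :
    algebraMap (MvPolynomial (Fin n) A) F (C a) ∈ Lr A F s :=
  Subring.subset_closure (Or.inl (Or.inl ⟨a, rfl⟩))

lemma X_mem {s : Finset (Fin n)} {k : Fin n} (hk : k ∈ s) :
    algebraMap (MvPolynomial (Fin n) A) F (X k) ∈ Lr A F s :=
  Subring.subset_closure (Or.inl (Or.inr ⟨k, hk, rfl⟩))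

lemma Xinv_mem {s : Finset (Fin n)} {k : Fin n} (hk : k ∈ s) :
    (algebraMap (MvPolynomial (Fin n) A) F (X k))⁻¹ ∈ Lr A F s :=
  Subring.subset_closure (Or.inr ⟨k, hk, rfl⟩)

lemma Lr_mono {s t : Finset (Fin n)} (h : s ⊆ t) : Lr A F s ≤ Lr A F t := by
  apply Subring.closure_mono
  gcongr

lemma zpow_mem' {s : Finset (Fin n)} {k : Fin n} (hk : k ∈ s) (e : ℤ) :
    (algebraMap (MvPolynomial (Fin n) A) F (X k)) ^ e ∈ Lr A F s := by
  cases e with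
  | ofNat m => simpa using pow_mem (X_mem hk) m
  | negSucc m =>
    rw [zpow_negSucc, ← inv_pow]
    exact pow_mem (Xinv_mem hk) _

lemma eval₂_mem {φ : A →+* F} {g : Fin n → F} {L : Subring F} (hφ : ∀ a, φ a ∈ L)
    (hg : ∀ k, g k ∈ L) (p : MvPolynomial (Fin n) A) : eval₂ φ g p ∈ L := by
  induction p using MvPolynomial.induction_on with
  | C a => simpa using hφ a
  | add p q hp hq => rw [eval₂_add]; exact add_mem hp hq
  | mul_X p k hp => rw [eval₂_mul, eval₂_X]; exact mul_mem hp (hg k)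

lemma eval₂_alg (p : MvPolynomial (Fin n) A) :
    eval₂ ((algebraMap (MvPolynomial (Fin n) A) F).comp (C : A →+* MvPolynomial (Fin n) A))
      (fun k => algebraMap (MvPolynomial (Fin n) A) F (X k)) p
      = algebraMap (MvPolynomial (Fin n) A) F p := by
  conv_rhs => rw [← eval₂_eta p, eval₂_comp_left]
  rfl

lemma alg_mem (p : MvPolynomial (Fin n) A) :
    algebraMap (MvPolynomial (Fin n) A) F p ∈ Lr A F (Finset.univ : Finset (Fin n)) := by
  rw [← eval₂_alg]
  exact eval₂_mem (fun a => C_mem _ a) (fun k => X_mem (Finset.mem_univ k)) p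

/-- second order Taylor expansion in one variable -/
lemma taylor {φ : A →+* F} {g : Fin n → F} {L₁ L : Subring F} (hL : L₁ ≤ L)
    (hφ : ∀ a, φ a ∈ L₁) (hg : ∀ k, g k ∈ L₁) (k : Fin n) {t : F} (ht : t ∈ L)
    (p : MvPolynomial (Fin n) A) :
    ∃ c ∈ L₁, ∃ r ∈ L,
      eval₂ φ (Function.update g k (g k + t)) p = eval₂ φ g p + c * t + r * t ^ 2 := by
  induction p using MvPolynomial.induction_on with
  | C a => exact ⟨0, zero_mem _, 0, zero_mem _, by simp⟩
  | add p q hp hq =>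
    obtain ⟨c, hc, r, hr, h⟩ := hp
    obtain ⟨c', hc', r', hr', h'⟩ := hq
    refine ⟨c + c', add_mem hc hc', r + r', add_mem hr hr', ?_⟩
    rw [eval₂_add, eval₂_add, h, h']; ring
  | mul_X p l hp =>
    obtain ⟨c, hc, r, hr, h⟩ := hp
    rw [eval₂_mul, eval₂_mul, eval₂_X, eval₂_X, h]
    by_cases hl : l = k
    · subst hl
      refine ⟨c * g l + eval₂ φ g p, add_mem (mul_mem hc (hg l)) (eval₂_mem hφ hg p),
        c + r * g l + r * t, ?_, ?_⟩
      · exact add_mem (add_mem (hL hc) (mul_mem hr (hL (hg l)))) (mul_mem hr ht)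
      · simp; ring
    · refine ⟨c * g l, mul_mem hc (hg l), r * g l, mul_mem hr (hL (hg l)), ?_⟩
      simp [hl]; ring

lemma zmem {s : Finset (Fin n)} (N : ℕ) :
    ((algebraMap (MvPolynomial (Fin n) A) F (∏ k ∈ s, X k)) ^ N)⁻¹ ∈ Lr A F s := by
  rw [← inv_pow]
  refine pow_mem ?_ N
  rw [map_prod, ← Finset.prod_inv_distrib]
  exact prod_mem fun k hk => Xinv_mem hk

variable [IsDomain A] [IsFractionRing (MvPolynomial (Fin n) A) F]

lemma X_ne (k : Fin n) : algebraMap (MvPolynomial (Fin n) A) F (X k) ≠ 0 := by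
  simp

lemma W_ne (s : Finset (Fin n)) (N : ℕ) :
    (algebraMap (MvPolynomial (Fin n) A) F (∏ k ∈ s, X k)) ^ N ≠ 0 := by
  apply pow_ne_zero
  rw [map_prod]
  exact Finset.prod_ne_zero_iff.2 fun k _ => X_ne k

/-- common denominators -/
lemma denom {s : Finset (Fin n)} (T : Subring (MvPolynomial (Fin n) A)) (hC : ∀ a, C a ∈ T)
    (hX : ∀ k ∈ s, X k ∈ T) {g : F} (hg : g ∈ Lr A F s) :
    ∃ N : ℕ, ∃ G ∈ T, g * (algebraMap (MvPolynomial (Fin n) A) F (∏ k ∈ s, X k)) ^ N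
      = algebraMap (MvPolynomial (Fin n) A) F G := by
  have hW : (∏ k ∈ s, X k : MvPolynomial (Fin n) A) ∈ T := prod_mem hX
  unfold Lr at hg
  induction hg using Subring.closure_induction with
  | mem y hy =>
    rcases hy with (⟨a, rfl⟩ | ⟨k, hk, rfl⟩) | ⟨k, hk, rfl⟩
    · exact ⟨0, C a, hC a, by simp⟩
    · exact ⟨0, X k, hX k hk, by simp⟩
    · refine ⟨1, ∏ l ∈ s.erase k, X l, prod_mem fun l hl => hX l (Finset.mem_of_mem_erase hl), ?_⟩
      rw [← Finset.mul_prod_erase s _ hk, pow_one, map_mul]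
      exact inv_mul_cancel_left₀ (X_ne k) _
  | zero => exact ⟨0, 0, zero_mem _, by simp⟩
  | one => exact ⟨0, 1, one_mem _, by simp⟩
  | add y z _ _ hy hz =>
    obtain ⟨N, G, hG, h⟩ := hy
    obtain ⟨M, H, hH, h'⟩ := hz
    refine ⟨N + M, G * (∏ k ∈ s, X k) ^ M + H * (∏ k ∈ s, X k) ^ N,
      add_mem (mul_mem hG (pow_mem hW _)) (mul_mem hH (pow_mem hW _)), ?_⟩
    rw [map_add, map_mul, map_mul, ← h, ← h', map_pow, map_pow]; ring
  | neg y _ hy =>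
    obtain ⟨N, G, hG, h⟩ := hy
    exact ⟨N, -G, neg_mem hG, by rw [map_neg, ← h]; ring⟩
  | mul y z _ _ hy hz =>
    obtain ⟨N, G, hG, h⟩ := hy
    obtain ⟨M, H, hH, h'⟩ := hz
    exact ⟨N + M, G * H, mul_mem hG hH, by rw [map_mul, ← h, ← h']; ring⟩

lemma denom0 {g : F} (hg : g ∈ Lr A F (Finset.univ : Finset (Fin n))) :
    ∃ N : ℕ, ∃ G, g * (algebraMap (MvPolynomial (Fin n) A) F (∏ k, X k)) ^ N
      = algebraMap (MvPolynomial (Fin n) A) F G := by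
  obtain ⟨N, G, -, h⟩ := denom ⊤ (fun _ => trivial) (fun _ _ => trivial) hg
  exact ⟨N, G, h⟩

/-- divisibility in the Laurent ring by a prime that is not a variable -/
lemma dvd_of_laurent {p G : MvPolynomial (Fin n) A} (hp : Prime p) (hX : ∀ k, ¬ p ∣ X k)
    (h : ∃ e ∈ Lr A F (Finset.univ : Finset (Fin n)),
      algebraMap (MvPolynomial (Fin n) A) F G = algebraMap (MvPolynomial (Fin n) A) F p * e) :
    p ∣ G := by
  obtain ⟨e, he, h⟩ := h
  obtain ⟨N, E, hE⟩ := denom0 he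
  have h2 : G * (∏ k, X k) ^ N = p * E := by
    apply IsFractionRing.injective (MvPolynomial (Fin n) A) F
    rw [map_mul, map_mul, map_pow, ← hE, h]; ring
  rcases hp.dvd_or_dvd (Dvd.intro _ h2.symm) with h3 | h3
  · exact h3
  · obtain ⟨k, -, hk⟩ := (hp.dvd_finsetProd_iff _).1 (hp.dvd_of_dvd_pow h3)
    exact absurd hk (hX k)

/-- reduction of coprimality to non-variable primes -/
lemma unit_of [UniqueFactorizationMonoid A] {d : F}
    (hd : d ∈ Lr A F (Finset.univ : Finset (Fin n))) (hd0 : d ≠ 0)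
    (h : ∀ p : MvPolynomial (Fin n) A, Prime p → (∀ k, ¬ p ∣ X k) →
      ¬ ∃ e ∈ Lr A F (Finset.univ : Finset (Fin n)),
        d = algebraMap (MvPolynomial (Fin n) A) F p * e) :
    ∃ e ∈ Lr A F (Finset.univ : Finset (Fin n)), d * e = 1 := by
  obtain ⟨N, D, hD⟩ := denom0 hd
  have hW := W_ne (A := A) (F := F) (Finset.univ : Finset (Fin n)) N
  have hD0 : D ≠ 0 := by
    rintro rfl
    rw [map_zero] at hD
    exact (mul_ne_zero hd0 hW) hD
  have key : ∀ E : MvPolynomial (Fin n) A, E ≠ 0 → E ∣ D →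
      ∃ e ∈ Lr A F (Finset.univ : Finset (Fin n)),
        algebraMap (MvPolynomial (Fin n) A) F E * e = 1 := by
    intro E
    induction E using UniqueFactorizationMonoid.induction_on_prime with
    | h₁ => intro h; exact absurd rfl h
    | h₂ y hy =>
      intro _ _
      obtain ⟨w, hw⟩ := hy.exists_right_inv
      exact ⟨_, alg_mem w, by rw [← map_mul, hw, map_one]⟩
    | h₃ a p ha hp ih =>
      intro _ hdiv
      obtain ⟨e, he, hae⟩ := ih ha (dvd_trans (Dvd.intro_left _ rfl) hdiv)
      have hpD : p ∣ D := dvd_trans (Dvd.intro _ rfl) hdiv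
      by_cases hX : ∃ k, p ∣ X k
      · obtain ⟨k, q, hq⟩ := hX
        refine ⟨algebraMap (MvPolynomial (Fin n) A) F q * (algebraMap (MvPolynomial (Fin n) A) F (X k))⁻¹ * e,
          mul_mem (mul_mem (alg_mem q) (Xinv_mem (Finset.mem_univ k))) he, ?_⟩
        have : algebraMap (MvPolynomial (Fin n) A) F p * algebraMap (MvPolynomial (Fin n) A) F q
            * (algebraMap (MvPolynomial (Fin n) A) F (X k))⁻¹ = 1 := by
          rw [← map_mul, ← hq]; exact mul_inv_cancel₀ (X_ne k)
        rw [map_mul]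
        linear_combination hae * (algebraMap (MvPolynomial (Fin n) A) F p * algebraMap (MvPolynomial (Fin n) A) F q
            * (algebraMap (MvPolynomial (Fin n) A) F (X k))⁻¹) + this
      · push Not at hX
        obtain ⟨q, hq⟩ := hpD
        refine absurd ⟨algebraMap (MvPolynomial (Fin n) A) F q * _,
          mul_mem (alg_mem q) (zmem (A := A) N), ?_⟩ (h p hp hX)
        rw [← mul_assoc, ← map_mul, ← hq, ← hD]
        exact (mul_inv_cancel_right₀ hW _).symm
  obtain ⟨e, he, h1⟩ := key D hD0 dvd_rfl
  refine ⟨(algebraMap (MvPolynomial (Fin n) A) F (∏ k, X k)) ^ N * e, mul_mem (pow_mem (alg_mem _) _) he, ?_⟩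
  rw [← mul_assoc, hD, h1]

end

section
variable {A : Type*} [CommRing A] {n : ℕ}

/-- set `x_i = 0` -/
noncomputable def sg (A : Type*) [CommRing A] {n : ℕ} (i : Fin n) :
    MvPolynomial (Fin n) A →ₐ[A] MvPolynomial (Fin n) A :=
  aeval (fun k => if k = i then 0 else X k)

lemma sg_X (i : Fin n) : sg A i (X i) = 0 := by simp [sg]

lemma sg_X_ne {i k : Fin n} (h : k ≠ i) : sg A i (X k) = X k := by simp [sg, h]

lemma sg_fix {i : Fin n} {p : MvPolynomial (Fin n) A} (h : i ∉ p.vars) : sg A i p = p := by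
  have := hom_congr_vars (f₁ := (sg A i).toRingHom) (f₂ := RingHom.id _) (p₁ := p) (p₂ := p)
    (by ext a; simp [sg]) (fun k hk _ => sg_X_ne (fun hki => h (hki ▸ hk))) rfl
  simpa using this

lemma sg_idem (i : Fin n) (p : MvPolynomial (Fin n) A) : sg A i (sg A i p) = sg A i p := by
  have : (sg A i).comp (sg A i) = sg A i := by
    ext k : 1
    by_cases hk : k = i
    · subst hk; simp [sg_X]
    · simp [sg_X_ne hk]
  exact congrArg (fun f => f p) this

lemma sg_dvd [IsDomain A] {i : Fin n} {p P : MvPolynomial (Fin n) A} (hP : P ≠ 0)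
    (h : i ∉ P.vars) (hp : p ∣ P) : sg A i p = p := by
  apply sg_fix
  obtain ⟨q, rfl⟩ := hp
  have h1 := degreeOf_mul_eq (n := i) (left_ne_zero_of_mul hP) (right_ne_zero_of_mul hP)
  have hv : ∀ f : MvPolynomial (Fin n) A, i ∉ f.vars ↔ degreeOf i f = 0 := by
    intro f
    classical
    simp [degreeOf_def, vars_def, Multiset.count_eq_zero]
  rw [hv] at h ⊢
  omega

variable {F : Type*} [Field F] [Algebra (MvPolynomial (Fin n) A) F]

lemma eval₂_sg (i : Fin n) (p : MvPolynomial (Fin n) A) :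
    eval₂ ((algebraMap (MvPolynomial (Fin n) A) F).comp (C : A →+* MvPolynomial (Fin n) A))
      (Function.update (fun k => algebraMap (MvPolynomial (Fin n) A) F (X k)) i 0) p
      = algebraMap (MvPolynomial (Fin n) A) F (sg A i p) := by
  induction p using MvPolynomial.induction_on with
  | C a => simp [sg]
  | add p q hp hq => rw [eval₂_add, hp, hq, map_add, map_add]
  | mul_X p k hp =>
    rw [eval₂_mul, hp, map_mul, map_mul, eval₂_X]
    by_cases hk : k = i
    · subst hk; simp [sg_X]
    · simp [sg_X_ne hk, hk]

lemma eval₂_congr_vars {φ : A →+* F} {g h : Fin n → F} {p : MvPolynomial (Fin n) A}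
    (H : ∀ k ∈ p.vars, g k = h k) : eval₂ φ g p = eval₂ φ h p :=
  eval₂Hom_congr' rfl (fun k hk _ => H k hk) rfl

lemma alg_fix_mem {i : Fin n} (p : MvPolynomial (Fin n) A) :
    algebraMap (MvPolynomial (Fin n) A) F (sg A i p) ∈ Lr A F (Finset.univ.erase i) := by
  rw [← eval₂_sg]
  refine eval₂_mem (fun a => C_mem _ a) (fun k => ?_) p
  by_cases hk : k = i
  · subst hk; simp
  · rw [Function.update_of_ne hk]
    exact X_mem (Finset.mem_erase.2 ⟨hk, Finset.mem_univ k⟩)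

variable [IsDomain A] [IsFractionRing (MvPolynomial (Fin n) A) F]

lemma denom1 {i : Fin n} {g : F} (hg : g ∈ Lr A F (Finset.univ.erase i)) :
    ∃ N : ℕ, ∃ G : MvPolynomial (Fin n) A, sg A i G = G ∧
      g * (algebraMap (MvPolynomial (Fin n) A) F (∏ k ∈ Finset.univ.erase i, X k)) ^ N
      = algebraMap (MvPolynomial (Fin n) A) F G := by
  obtain ⟨N, G, hG, h⟩ := denom (RingHom.eqLocus (sg A i).toRingHom (RingHom.id _))
    (fun a => by simp [RingHom.mem_eqLocus, sg])
    (fun k hk => by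
      rw [RingHom.mem_eqLocus]
      exact sg_X_ne (Finset.ne_of_mem_erase hk)) hg
  exact ⟨N, G, hG, h⟩

lemma denom2 {i : Fin n} {g h : F} (hg : g ∈ Lr A F (Finset.univ.erase i))
    (hh : h ∈ Lr A F (Finset.univ.erase i)) :
    ∃ w : F, w ≠ 0 ∧ w ∈ Lr A F (Finset.univ : Finset (Fin n)) ∧
      w⁻¹ ∈ Lr A F (Finset.univ : Finset (Fin n)) ∧
      ∃ G H : MvPolynomial (Fin n) A, sg A i G = G ∧ sg A i H = H ∧
      g * w = algebraMap (MvPolynomial (Fin n) A) F G ∧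
      h * w = algebraMap (MvPolynomial (Fin n) A) F H := by
  obtain ⟨N, G, hG, h1⟩ := denom1 hg
  obtain ⟨M, H, hH, h2⟩ := denom1 hh
  have hW : sg A i (∏ k ∈ Finset.univ.erase i, X k) = ∏ k ∈ Finset.univ.erase i, X k := by
    rw [map_prod]
    exact Finset.prod_congr rfl fun k hk => sg_X_ne (Finset.ne_of_mem_erase hk)
  refine ⟨_, W_ne (A := A) (Finset.univ.erase i) (N + M), pow_mem (alg_mem _) _,
    Lr_mono (Finset.erase_subset _ _) (zmem (N + M)),
    G * (∏ k ∈ Finset.univ.erase i, X k) ^ M, H * (∏ k ∈ Finset.univ.erase i, X k) ^ N,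
    ?_, ?_, ?_, ?_⟩
  · rw [map_mul, map_pow, hG, hW]
  · rw [map_mul, map_pow, hH, hW]
  · rw [map_mul, map_pow, ← h1]; ring
  · rw [map_mul, map_pow, ← h2]; ring

/-- the exponent of `x_i` vanishes -/
lemma exp_zero {i : Fin n} {g h : F} (hg : g ∈ Lr A F (Finset.univ.erase i))
    (hh : h ∈ Lr A F (Finset.univ.erase i)) (hg0 : g ≠ 0) (m : ℕ)
    (he : g = (algebraMap (MvPolynomial (Fin n) A) F (X i)) ^ m * h) : m = 0 := by
  obtain ⟨w, hw0, -, -, G, H, hG, hH, h1, h2⟩ := denom2 hg hh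
  by_contra hm
  have h3 : G = X i ^ m * H := by
    apply IsFractionRing.injective (MvPolynomial (Fin n) A) F
    rw [map_mul, map_pow, ← h1, ← h2, he]; ring
  have h4 : G = 0 := by
    rw [← hG, h3, map_mul, map_pow, sg_X, zero_pow hm, zero_mul]
  rw [h4, map_zero] at h1
  exact mul_ne_zero hg0 hw0 h1

/-- linear-in-`x_i` divisibility -/
lemma lin_dvd {i : Fin n} {g h : F} (hg : g ∈ Lr A F (Finset.univ.erase i))
    (hh : h ∈ Lr A F (Finset.univ.erase i)) {p : MvPolynomial (Fin n) A} (hp : Prime p)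
    (hX : ∀ k, ¬ p ∣ X k) (hpi : sg A i p = p)
    (hd : ∃ e ∈ Lr A F (Finset.univ : Finset (Fin n)),
      g + h * algebraMap (MvPolynomial (Fin n) A) F (X i)
        = algebraMap (MvPolynomial (Fin n) A) F p * e) :
    ∃ e ∈ Lr A F (Finset.univ : Finset (Fin n)),
      h = algebraMap (MvPolynomial (Fin n) A) F p * e := by
  obtain ⟨w, hw0, hw, hwi, G, H, hG, hH, h1, h2⟩ := denom2 hg hh
  obtain ⟨e, he, hd⟩ := hd
  have h3 : p ∣ G + H * X i := by
    refine dvd_of_laurent (F := F) hp hX ⟨e * w, mul_mem he hw, ?_⟩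
    rw [map_add, map_mul, ← h1, ← h2]
    linear_combination hd * w
  have h4 : p ∣ G := by
    have := map_dvd (sg A i) h3
    rwa [hpi, map_add, map_mul, sg_X, mul_zero, add_zero, hG] at this
  have h5 : p ∣ H := ((hp.dvd_or_dvd ((dvd_add_right h4).1 h3)).resolve_right (hX i))
  obtain ⟨q, hq⟩ := h5
  refine ⟨algebraMap (MvPolynomial (Fin n) A) F q * w⁻¹, mul_mem (alg_mem q) hwi, ?_⟩
  rw [← mul_assoc, ← map_mul, ← hq, ← h2, mul_inv_cancel_right₀ hw0]

end

end Caterpillar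

/-- The three-step lemma (Lemma 2.2 of Fomin–Zelevinsky, "The Laurent
phenomenon"): for three consecutive exchanges along edges labeled i, j, i of a
caterpillar pattern, with exchange polynomials P, Q, R over a UFD A satisfying
the caterpillar conditions, the new variables z = P/xᵢ, u = Q(z)/xⱼ,
v = R(u)/z are Laurent polynomials over A in the initial cluster, and moreover
gcd(z,u) = 1 and gcd(z,v) = 1 in the Laurent polynomial ring L₀. -/
theorem caterpillar_three_step_lemma
    (A : Type*) [CommRing A] [IsDomain A] [UniqueFactorizationMonoid A]
    (n : ℕ) (i j : Fin n) (hij : i ≠ j)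
    (F : Type*) [Field F] [Algebra (MvPolynomial (Fin n) A) F]
    [IsFractionRing (MvPolynomial (Fin n) A) F]
    (φ : A →+* F)
    (hφ : φ = (algebraMap (MvPolynomial (Fin n) A) F).comp
      (C : A →+* MvPolynomial (Fin n) A))
    (x : Fin n → F) (hx : ∀ k, x k = algebraMap (MvPolynomial (Fin n) A) F (X k))
    (P Q R : MvPolynomial (Fin n) A)
    (hPne : P ≠ 0) (hQne : Q ≠ 0) (hRne : R ≠ 0)
    -- none of P, Q, R is divisible by any cluster variable
    (hPdiv : ∀ k, ¬ (X k ∣ P)) (hQdiv : ∀ k, ¬ (X k ∣ Q)) (hRdiv : ∀ k, ¬ (X k ∣ R))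
    -- P and R do not depend on the i-th variable; Q does not depend on the j-th
    (hPdep : i ∉ P.vars) (hRdep : i ∉ R.vars) (hQdep : j ∉ Q.vars)
    -- Q₀ = Q|_{xᵢ = 0}
    (Q₀ : MvPolynomial (Fin n) A)
    (hQ₀ : Q₀ = aeval (fun k => if k = i then 0 else X k) Q)
    -- P and Q₀ are coprime
    (hcop : ∀ d : MvPolynomial (Fin n) A, d ∣ P → d ∣ Q₀ → IsUnit d)
    -- key condition: R|_{xⱼ ← Q₀/xⱼ} = L · Q₀^b · P, coefficient of L coprime to P
    (hkey : ∃ (b : ℕ) (cL : A) (eL : Fin n → ℤ),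
      (∀ d : MvPolynomial (Fin n) A, d ∣ C cL → d ∣ P → IsUnit d) ∧
      eval₂ φ (Function.update x j (eval₂ φ x Q₀ / x j)) R
        = (φ cL * ∏ k, x k ^ eL k) * (eval₂ φ x Q₀) ^ b * eval₂ φ x P)
    -- the three exchanges
    (z u v : F)
    (hz : z = eval₂ φ x P / x i)
    (hu : u = eval₂ φ (Function.update x i z) Q / x j)
    (hv : v = eval₂ φ (Function.update (Function.update x i z) j u) R / z)
    -- the Laurent polynomial ring of the initial cluster
    (L₀ : Subring F)
    (hL₀ : L₀ = Subring.closure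
      (Set.range φ ∪ Set.range x ∪ Set.range (fun k => (x k)⁻¹))) :
    z ∈ L₀ ∧ u ∈ L₀ ∧ v ∈ L₀ ∧
    (∀ d ∈ L₀, (∃ e ∈ L₀, z = d * e) → (∃ e ∈ L₀, u = d * e) →
      ∃ e ∈ L₀, d * e = 1) ∧
    (∀ d ∈ L₀, (∃ e ∈ L₀, z = d * e) → (∃ e ∈ L₀, v = d * e) →
      ∃ e ∈ L₀, d * e = 1) := by
  subst hφ
  obtain rfl : x = fun k => algebraMap (MvPolynomial (Fin n) A) F (X k) := funext hx
  have hL : L₀ = Caterpillar.Lr A F (Finset.univ : Finset (Fin n)) := by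
    rw [hL₀, Caterpillar.Lr]; simp [Set.image_univ]
  clear hL₀ hx
  subst hL
  have hQ₀' : Q₀ = Caterpillar.sg A i Q := hQ₀
  clear hQ₀
  obtain ⟨b, cL, eL, hcL, hkey⟩ := hkey
  set alg := algebraMap (MvPolynomial (Fin n) A) F with halg
  set φ := alg.comp (C : A →+* MvPolynomial (Fin n) A) with hφ
  set x : Fin n → F := fun k => alg (X k) with hx
  set L := Caterpillar.Lr A F (Finset.univ : Finset (Fin n)) with hLdef
  set L₁ := Caterpillar.Lr A F (Finset.univ.erase i) with hL₁def
  have hle : L₁ ≤ L := Caterpillar.Lr_mono (Finset.erase_subset _ _)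
  have hx0 : ∀ k, x k ≠ 0 := fun k => Caterpillar.X_ne k
  have hinj : Function.Injective alg := IsFractionRing.injective (MvPolynomial (Fin n) A) F
  have hev : ∀ p, eval₂ φ x p = alg p := fun p => Caterpillar.eval₂_alg p
  rw [hev] at hz
  simp only [hev] at hkey
  have hxL : ∀ k, x k ∈ L := fun k => Caterpillar.X_mem (Finset.mem_univ k)
  have hxiL : ∀ k, (x k)⁻¹ ∈ L := fun k => Caterpillar.Xinv_mem (Finset.mem_univ k)
  have hx1 : ∀ k, k ≠ i → x k ∈ L₁ := fun k hk =>
    Caterpillar.X_mem (Finset.mem_erase.2 ⟨hk, Finset.mem_univ k⟩)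
  have hyi : (x j)⁻¹ ∈ L₁ :=
    Caterpillar.Xinv_mem (Finset.mem_erase.2 ⟨hij.symm, Finset.mem_univ j⟩)
  have hφ1 : ∀ a, φ a ∈ L₁ := fun a => Caterpillar.C_mem _ a
  have haL : ∀ p, alg p ∈ L := fun p => Caterpillar.alg_mem p
  have hP0 : alg P ≠ 0 := fun h => hPne (hinj (by rw [h, map_zero]))
  have hz0 : z ≠ 0 := by rw [hz]; exact div_ne_zero hP0 (hx0 i)
  have hzL : z ∈ L := by rw [hz, div_eq_mul_inv]; exact mul_mem (haL P) (hxiL i)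
  have hPz : alg P = z * x i := by rw [hz, div_mul_cancel₀ _ (hx0 i)]
  have hQ01 : alg Q₀ ∈ L₁ := by rw [hQ₀']; exact Caterpillar.alg_fix_mem Q
  have hP1 : alg P ∈ L₁ := by
    rw [← Caterpillar.sg_fix hPdep]; exact Caterpillar.alg_fix_mem P
  have hg1 : ∀ k, Function.update x i 0 k ∈ L₁ := by
    intro k
    by_cases hk : k = i
    · subst hk; simp
    · rw [Function.update_of_ne hk]; exact hx1 k hk
  -- expansion of Q
  obtain ⟨c₁, hc₁, r₁, hr₁, h1⟩ := Caterpillar.taylor hle hφ1 hg1 i hzL Q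
  rw [Function.update_self, zero_add, Function.update_idem,
    (Caterpillar.eval₂_sg i Q : eval₂ φ (Function.update x i 0) Q = _), ← hQ₀'] at h1
  rw [h1] at hu
  set a : F := alg Q₀ / x j with ha
  have ha1 : a ∈ L₁ := by rw [ha, div_eq_mul_inv]; exact mul_mem hQ01 hyi
  set t : F := (c₁ * (x j)⁻¹) * z + (r₁ * (x j)⁻¹) * z ^ 2 with ht
  have htL : t ∈ L := add_mem (mul_mem (mul_mem (hle hc₁) (hxiL j)) hzL)
    (mul_mem (mul_mem hr₁ (hxiL j)) (pow_mem hzL 2))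
  have hut : u = a + t := by rw [hu, ha, ht]; ring
  have huL : u ∈ L := by rw [hut]; exact add_mem (hle ha1) htL
  -- expansion of R
  have hg2 : ∀ k, Function.update (Function.update x i 0) j a k ∈ L₁ := by
    intro k
    by_cases hk : k = j
    · subst hk; rw [Function.update_self]; exact ha1
    · rw [Function.update_of_ne hk]; exact hg1 k
  obtain ⟨c₂, hc₂, r₂, hr₂, h2⟩ := Caterpillar.taylor hle hφ1 hg2 j htL R
  have hRa1 := Caterpillar.eval₂_mem hφ1 hg2 R
  have hdrop : ∀ w s : F, eval₂ φ (Function.update (Function.update x i w) j s) R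
      = eval₂ φ (Function.update x j s) R := by
    intro w s
    refine Caterpillar.eval₂_congr_vars fun k hk => ?_
    have hki : k ≠ i := fun h => hRdep (h ▸ hk)
    by_cases hkj : k = j
    · subst hkj; simp
    · simp [hkj, hki]
  rw [Function.update_self, Function.update_idem, ← hut, hdrop, hdrop, hkey] at h2
  rw [hdrop, hkey] at hRa1
  rw [hdrop, h2] at hv
  set M : F := (φ cL * ∏ k, x k ^ eL k) * alg Q₀ ^ b with hM
  set γ : F := c₂ * (c₁ * (x j)⁻¹) with hγ
  set h : F := c₂ * (r₁ * (x j)⁻¹) + r₂ * ((c₁ * (x j)⁻¹) + (r₁ * (x j)⁻¹) * z) ^ 2 with hh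
  have hγ1 : γ ∈ L₁ := mul_mem hc₂ (mul_mem hc₁ hyi)
  have hhL : h ∈ L := add_mem (mul_mem (hle hc₂) (mul_mem hr₁ (hxiL j)))
    (mul_mem hr₂ (pow_mem (add_mem (mul_mem (hle hc₁) (hxiL j))
      (mul_mem (mul_mem hr₁ (hxiL j)) hzL)) 2))
  have hv' : v = γ + M * x i + z * h := by
    rw [hv, div_eq_iff hz0, hPz, hγ, hh, ht]; ring
  have hML : M ∈ L := mul_mem (mul_mem (hle (hφ1 cL))
    (prod_mem fun k _ => Caterpillar.zpow_mem' (Finset.mem_univ k) (eL k))) (pow_mem (haL _) b)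
  have hvL : v ∈ L := by
    rw [hv']
    exact add_mem (add_mem (hle hγ1) (mul_mem hML (hxL i))) (mul_mem hzL hhL)
  -- a prime dividing z divides P
  have hpz : ∀ p : MvPolynomial (Fin n) A, Prime p → (∀ k, ¬ p ∣ X k) →
      (∃ e ∈ L, z = alg p * e) → p ∣ P := by
    rintro p hp hpX ⟨e, he, hze⟩
    refine Caterpillar.dvd_of_laurent (F := F) hp hpX ⟨e * x i, mul_mem he (hxL i), ?_⟩
    rw [← mul_assoc, ← halg, ← hze, hPz]
  have htrans : ∀ (p : MvPolynomial (Fin n) A) (d w : F), (∃ e ∈ L, d = alg p * e) →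
      (∃ e ∈ L, w = d * e) → ∃ e ∈ L, w = alg p * e := by
    rintro p d w ⟨e, he, rfl⟩ ⟨f, hf, rfl⟩
    exact ⟨e * f, mul_mem he hf, by ring⟩
  have hdne : ∀ d : F, (∃ e ∈ L, z = d * e) → d ≠ 0 := by
    rintro d ⟨e, -, he⟩ rfl
    exact hz0 (by rw [he, zero_mul])
  refine ⟨hzL, huL, hvL, ?_, ?_⟩
  · intro d hd hdz hdu
    refine Caterpillar.unit_of (A := A) hd (hdne d hdz) ?_
    intro p hp hpX hpd
    have hpz' := htrans p d z hpd hdz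
    have hpP := hpz p hp hpX hpz'
    obtain ⟨e, he, hze⟩ := hpz'
    obtain ⟨f, hf, huf⟩ := htrans p d u hpd hdu
    refine hp.not_isUnit (hcop p hpP ?_)
    refine Caterpillar.dvd_of_laurent (F := F) hp hpX
      ⟨(f - e * ((c₁ * (x j)⁻¹) + (r₁ * (x j)⁻¹) * z)) * x j, ?_, ?_⟩
    · exact mul_mem (sub_mem hf (mul_mem he (add_mem (mul_mem (hle hc₁) (hxiL j))
        (mul_mem (mul_mem hr₁ (hxiL j)) hzL)))) (hxL j)
    · have h3 : alg Q₀ = a * x j := by rw [ha, div_mul_cancel₀ _ (hx0 j)]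
      rw [← halg, h3]
      have h4 : a = u - t := by rw [hut]; ring
      rw [h4, ht]
      linear_combination (x j) * huf - x j * ((c₁ * (x j)⁻¹) + (r₁ * (x j)⁻¹) * z) * hze
  · intro d hd hdz hdv
    refine Caterpillar.unit_of (A := A) hd (hdne d hdz) ?_
    intro p hp hpX hpd
    have hpz' := htrans p d z hpd hdz
    have hpP := hpz p hp hpX hpz'
    obtain ⟨e, he, hze⟩ := hpz'
    obtain ⟨f, hf, hvf⟩ := htrans p d v hpd hdv
    have hpc : ¬ p ∣ C cL := fun h => hp.not_isUnit (hcL p h hpP)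
    have hpQ : ¬ p ∣ Q₀ := fun h => hp.not_isUnit (hcop p hpP h)
    have hcL0 : φ cL ≠ 0 := by
      intro h0
      have : (C cL : MvPolynomial (Fin n) A) = 0 := hinj (by rw [map_zero]; exact h0)
      exact hpc (this ▸ dvd_zero p)
    have hQ0 : alg Q₀ ≠ 0 := by
      intro h0
      have : Q₀ = 0 := hinj (by rw [map_zero]; exact h0)
      exact hpQ (this ▸ dvd_zero p)
    set K : F := (φ cL * ∏ k ∈ Finset.univ.erase i, x k ^ eL k) * alg Q₀ ^ b with hK
    have hK1 : K ∈ L₁ := mul_mem (mul_mem (hφ1 cL)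
      (prod_mem fun k hk => Caterpillar.zpow_mem' hk (eL k))) (pow_mem hQ01 b)
    have hK0 : K ≠ 0 := mul_ne_zero (mul_ne_zero hcL0
      (Finset.prod_ne_zero_iff.2 fun k _ => zpow_ne_zero _ (hx0 k))) (pow_ne_zero _ hQ0)
    have hMK : M = x i ^ eL i * K := by
      rw [hM, hK, ← Finset.mul_prod_erase _ _ (Finset.mem_univ i)]; ring
    have hM0 : M ≠ 0 := by rw [hMK]; exact mul_ne_zero (zpow_ne_zero _ (hx0 i)) hK0
    have hei : eL i = 0 := by
      obtain ⟨m, hm | hm⟩ := Int.eq_nat_or_neg (eL i)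
      · have := Caterpillar.exp_zero hRa1 (mul_mem hK1 hP1) (mul_ne_zero hM0 hP0) m
          (by rw [hMK, hm, zpow_natCast]; ring)
        rw [hm, this]; rfl
      · have := Caterpillar.exp_zero (mul_mem hK1 hP1) hRa1 (mul_ne_zero hK0 hP0) m
          (by
            rw [hMK, hm, zpow_neg, zpow_natCast]
            have h5 : x i ^ m * (x i ^ m)⁻¹ = 1 := mul_inv_cancel₀ (pow_ne_zero _ (hx0 i))
            linear_combination (-(K * alg P)) * h5)
        rw [hm, this]; rfl
    have hM1 : M ∈ L₁ := by rw [hMK, hei, zpow_zero, one_mul]; exact hK1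
    obtain ⟨q, hq, hMq⟩ := Caterpillar.lin_dvd hγ1 hM1 hp hpX
      (Caterpillar.sg_dvd hPne hPdep hpP)
      ⟨f - e * h, sub_mem hf (mul_mem he hhL), by
        rw [← halg]
        linear_combination hvf - hv' - h * hze⟩
    have hdv : p ∣ C cL * Q₀ ^ b := by
      refine Caterpillar.dvd_of_laurent (F := F) hp hpX
        ⟨q * ∏ k, x k ^ (-eL k), mul_mem hq
          (prod_mem fun k _ => Caterpillar.zpow_mem' (Finset.mem_univ k) _), ?_⟩
      have h6 : (∏ k, x k ^ eL k) * ∏ k, x k ^ (-eL k) = 1 := by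
        rw [← Finset.prod_mul_distrib]
        refine Finset.prod_eq_one fun k _ => ?_
        rw [zpow_neg, mul_inv_cancel₀ (zpow_ne_zero _ (hx0 k))]
      rw [← mul_assoc, ← hMq, map_mul, map_pow, ← halg, hM]
      change φ cL * _ = _
      linear_combination (-(φ cL * alg Q₀ ^ b)) * h6
    rcases hp.dvd_or_dvd hdv with h7 | h7
    · exact hpc h7
    · exact hpQ (hp.dvd_of_dvd_pow h7)
end
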